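/- Let V be a simple cuspidal module over the N=2 Ramond algebra 𝔤. Then dim(V_λ ∩ V_τ) ≤ 2 for every λ ∈ ℂ and every parity τ ∈ {0,1}. -/

import Mathlib

open Submodule

/-- A module over the `N = 2` Ramond algebra `𝔤`: a `ℤ/2`-graded complex vector
space `V = even ⊕ odd` with parity-preserving operators `L m`, `H m`,
parity-reversing operators `Gp m` (`G_m^+`), `Gm m` (`G_m^-`), and a scalar `c₀`
(the action of the central element `C`), subject to the defining relations. -/
structure RamondRep (V : Type) [AddCommGroup V] [Module ℂ V] : Type where
  L : ℤ → V →ₗ[ℂ] V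
  H : ℤ → V →ₗ[ℂ] V
  Gp : ℤ → V →ₗ[ℂ] V
  Gm : ℤ → V →ₗ[ℂ] V
  c₀ : ℂ
  even : Submodule ℂ V
  odd : Submodule ℂ V
  grading : IsCompl even odd
  L_even : ∀ (m : ℤ), ∀ v ∈ even, L m v ∈ even
  L_odd : ∀ (m : ℤ), ∀ v ∈ odd, L m v ∈ odd
  H_even : ∀ (m : ℤ), ∀ v ∈ even, H m v ∈ even
  H_odd : ∀ (m : ℤ), ∀ v ∈ odd, H m v ∈ odd
  Gp_even : ∀ (m : ℤ), ∀ v ∈ even, Gp m v ∈ odd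
  Gp_odd : ∀ (m : ℤ), ∀ v ∈ odd, Gp m v ∈ even
  Gm_even : ∀ (m : ℤ), ∀ v ∈ even, Gm m v ∈ odd
  Gm_odd : ∀ (m : ℤ), ∀ v ∈ odd, Gm m v ∈ even
  rel_LL : ∀ (m n : ℤ) (v : V),
    L m (L n v) - L n (L m v) =
      ((n : ℂ) - (m : ℂ)) • L (m + n) v +
        ((1 / 12 : ℂ) * ((n : ℂ) ^ 3 - (n : ℂ)) *
          (if m + n = 0 then (1 : ℂ) else 0) * c₀) • v
  rel_HH : ∀ (m n : ℤ) (v : V),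
    H m (H n v) - H n (H m v) =
      ((1 / 3 : ℂ) * (m : ℂ) * (if m + n = 0 then (1 : ℂ) else 0) * c₀) • v
  rel_LH : ∀ (m n : ℤ) (v : V),
    L m (H n v) - H n (L m v) = (n : ℂ) • H (m + n) v
  rel_LGp : ∀ (m p : ℤ) (v : V),
    L m (Gp p v) - Gp p (L m v) = ((p : ℂ) - (m : ℂ) / 2) • Gp (p + m) v
  rel_LGm : ∀ (m p : ℤ) (v : V),
    L m (Gm p v) - Gm p (L m v) = ((p : ℂ) - (m : ℂ) / 2) • Gm (p + m) v
  rel_HGp : ∀ (m p : ℤ) (v : V),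
    H m (Gp p v) - Gp p (H m v) = Gp (m + p) v
  rel_HGm : ∀ (m p : ℤ) (v : V),
    H m (Gm p v) - Gm p (H m v) = -(Gm (m + p) v)
  rel_GpGm : ∀ (p q : ℤ) (v : V),
    Gp p (Gm q v) + Gm q (Gp p v) =
      (-2 : ℂ) • L (p + q) v + ((p : ℂ) - (q : ℂ)) • H (p + q) v +
        ((1 / 3 : ℂ) * ((p : ℂ) ^ 2 - 1 / 4) *
          (if p + q = 0 then (1 : ℂ) else 0) * c₀) • v
  rel_GpGp : ∀ (p q : ℤ) (v : V), Gp p (Gp q v) + Gp q (Gp p v) = 0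
  rel_GmGm : ∀ (p q : ℤ) (v : V), Gm p (Gm q v) + Gm q (Gm p v) = 0

namespace RamondRep

variable {V : Type} [AddCommGroup V] [Module ℂ V]

/-- The weight space `V_μ = {v ∈ V : L₀ v = μ v}`. -/
def wt (ρ : RamondRep V) (μ : ℂ) : Submodule ℂ V :=
  Module.End.eigenspace (ρ.L 0) μ

/-- The parity components, indexed by `ZMod 2`. -/
def parity (ρ : RamondRep V) (τ : ZMod 2) : Submodule ℂ V :=
  if τ = 0 then ρ.even else ρ.odd

/-- `V` is a weight module: it is the sum of its weight spaces. -/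
def IsWeight (ρ : RamondRep V) : Prop := (⨆ μ : ℂ, ρ.wt μ) = ⊤

/-- `V` is cuspidal: a weight module with uniformly bounded weight multiplicities
in each parity. -/
def Cuspidal (ρ : RamondRep V) : Prop :=
  ρ.IsWeight ∧ ∃ p : ℕ, ∀ (μ : ℂ) (τ : ZMod 2),
    Module.rank ℂ ↥(ρ.wt μ ⊓ ρ.parity τ) ≤ (p : Cardinal)

/-- A subspace invariant under all the operators. -/
def IsSubmod (ρ : RamondRep V) (W : Submodule ℂ V) : Prop :=
  (∀ (m : ℤ), ∀ v ∈ W, ρ.L m v ∈ W) ∧ (∀ (m : ℤ), ∀ v ∈ W, ρ.H m v ∈ W) ∧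
    (∀ (m : ℤ), ∀ v ∈ W, ρ.Gp m v ∈ W) ∧ (∀ (m : ℤ), ∀ v ∈ W, ρ.Gm m v ∈ W)

/-- A graded subspace invariant under all the operators. -/
def IsGradedSubmod (ρ : RamondRep V) (W : Submodule ℂ V) : Prop :=
  ρ.IsSubmod W ∧ W = (W ⊓ ρ.even) ⊔ (W ⊓ ρ.odd)

/-- The trivial representation: all operators act by zero. -/
def IsTrivialRep (ρ : RamondRep V) : Prop :=
  ∀ (m : ℤ) (v : V), ρ.L m v = 0 ∧ ρ.H m v = 0 ∧ ρ.Gp m v = 0 ∧ ρ.Gm m v = 0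

/-- `V` is simple: nontrivial, and its only graded submodules are `⊥` and `⊤`. -/
def IsSimple (ρ : RamondRep V) : Prop :=
  ¬ ρ.IsTrivialRep ∧
    ∀ W : Submodule ℂ V, ρ.IsGradedSubmod W → W = ⊥ ∨ W = ⊤

/-- `V` is generated by `v` as a `𝔤`-module. -/
def GeneratedBy (ρ : RamondRep V) (v : V) : Prop :=
  ∀ W : Submodule ℂ V, ρ.IsSubmod W → v ∈ W → W = ⊤

/-- `V` is a highest weight module. -/
def IsHighestWeight (ρ : RamondRep V) : Prop :=
  ∃ v : V, v ≠ 0 ∧ ρ.GeneratedBy v ∧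
    (∃ h h' : ℂ, ρ.L 0 v = h • v ∧ ρ.H 0 v = h' • v) ∧
    (∀ m : ℤ, 0 < m → ρ.L m v = 0 ∧ ρ.H m v = 0 ∧ ρ.Gp m v = 0 ∧ ρ.Gm m v = 0) ∧
    ρ.Gp 0 v = 0

/-- `V` is a lowest weight module. -/
def IsLowestWeight (ρ : RamondRep V) : Prop :=
  ∃ v : V, v ≠ 0 ∧ ρ.GeneratedBy v ∧
    (∃ h h' : ℂ, ρ.L 0 v = h • v ∧ ρ.H 0 v = h' • v) ∧
    (∀ m : ℤ, m < 0 → ρ.L m v = 0 ∧ ρ.H m v = 0 ∧ ρ.Gp m v = 0 ∧ ρ.Gm m v = 0) ∧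
    ρ.Gm 0 v = 0

end RamondRep

/-!
The relations force the central charge to vanish, so the `H m` commute. Every homogeneous space
`V_λ ∩ V_τ` is finite-dimensional and hence carries finitely many charges, i.e. `H 0`-eigenvalues.
On a fixed charge `s ≠ 0`, the Kleinecke–Shirokov theorem shows that the `H m` satisfy the
relations of the operators `s t ^ m` up to nilpotents. These nilpotents commute, and their common
kernel contains vectors `u k`, `k ∈ ℤ`, of weights `λ + k`, spanning a module of the intermediate
series over the operators `H m` and `L m - (m / 2) H m`.

Some charge `σ` is nonzero, and the mirror involution, which reverses charges, lets one assume
`σ ∉ ℕ`. Take `s` minimal among the charges in `σ - ℕ`; it is nonzero, and all `G⁻ m` kill the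
corresponding `u k`, so by simplicity the products of the `G⁺ m` applied to the `u k` span `V`.
Moreover a nonzero vector of charge `t` killed by all `G⁻ m` generates a submodule whose charges
lie in `t + ℕ`, so there is none of charge `s + 1`. As `G⁻ m (G⁺ a (u (k - a)))` is affine in `a`,
so is `G⁺ a (u (k - a))`, and `V` is spanned by the vectors `u k`, `G⁺ 0 (u k)`, `G⁺ 1 (u k)` and
`G⁺ 0 (G⁺ 1 (u k))`, of which two have any given weight in `λ + ℤ` and parity.
-/

section Commutator

open Polynomial

variable {R A : Type*} [CommRing R] [Ring A] [Algebra R A]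

theorem commute_aeval_of_commute {B C : A} (h : Commute C B) (p : R[X]) :
    Commute C (aeval B p) := by
  have hB : aeval B p ∈ Subalgebra.centralizer R {C} :=
    Algebra.adjoin_le (s := {B}) (by simpa [Set.mem_centralizer_iff] using h.eq)
      (aeval_mem_adjoin_singleton R B)
  exact (Subalgebra.mem_centralizer_iff R).1 hB C rfl

theorem lie_aeval_of_commute_lie {D B : A} (h : Commute ⁅D, B⁆ B) (p : R[X]) :
    ⁅D, aeval B p⁆ = aeval B (derivative p) * ⁅D, B⁆ := by
  induction p using Polynomial.induction_on with
  | C a =>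
    rw [aeval_C, derivative_C, map_zero, zero_mul, Ring.lie_def,
      (Algebra.commute_algebraMap_right a D).eq, sub_self]
  | add p q hp hq =>
    rw [derivative_add, map_add, map_add, add_mul, ← hp, ← hq]
    simp only [Ring.lie_def]
    noncomm_ring
  | monomial n a ih =>
    rw [pow_succ, ← mul_assoc]
    generalize Polynomial.C a * X ^ n = q at ih
    calc ⁅D, aeval B (q * X)⁆
        = ⁅D, aeval B q⁆ * B + aeval B q * ⁅D, B⁆ := by
          simp only [map_mul, aeval_X, Ring.lie_def]; noncomm_ring
      _ = aeval B (derivative (q * X)) * ⁅D, B⁆ := by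
          rw [ih, mul_assoc, h.eq, derivative_mul, derivative_X, mul_one, map_add, map_mul,
            aeval_X, add_mul, mul_assoc]

theorem aeval_derivative_mul_lie_pow_eq_zero {D B : A} (h : Commute ⁅D, B⁆ B) {p : R[X]} {n : ℕ}
    (hp : aeval B p * ⁅D, B⁆ ^ n = 0) :
    aeval B (derivative p) * ⁅D, B⁆ ^ (2 * n + 1) = 0 := by
  have hp' : ⁅D, B⁆ ^ n * aeval B p = 0 := by
    rw [((commute_aeval_of_commute h p).pow_left n).eq, hp]
  calc aeval B (derivative p) * ⁅D, B⁆ ^ (2 * n + 1)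
      = ⁅D, B⁆ ^ n * (aeval B (derivative p) * ⁅D, B⁆) * ⁅D, B⁆ ^ n := by
        rw [← mul_assoc, ((commute_aeval_of_commute h (derivative p)).pow_left n).eq, mul_assoc,
          mul_assoc, ← pow_succ', ← pow_add]
        congr 2; ring
    _ = ⁅D, B⁆ ^ n * D * (aeval B p * ⁅D, B⁆ ^ n)
          - ⁅D, B⁆ ^ n * aeval B p * D * ⁅D, B⁆ ^ n := by
        rw [← lie_aeval_of_commute_lie h, Ring.lie_def D (aeval B p)]; noncomm_ring
    _ = 0 := by rw [hp, hp', mul_zero, zero_mul, zero_mul, sub_zero]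

/-- The **Kleinecke–Shirokov theorem** for algebraic elements. -/
theorem isNilpotent_lie_of_isIntegral {K : Type*} [Field K] [CharZero K] [Algebra K A] {D B : A}
    (hB : IsIntegral K B) (h : Commute ⁅D, B⁆ B) : IsNilpotent ⁅D, B⁆ := by
  suffices key : ∀ (d : ℕ) (p : K[X]), p ≠ 0 → p.natDegree = d →
      ∀ n : ℕ, aeval B p * ⁅D, B⁆ ^ n = 0 → IsNilpotent ⁅D, B⁆ from
    key _ (minpoly K B) (minpoly.ne_zero hB) rfl 0 (by rw [minpoly.aeval, zero_mul])
  intro d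
  induction d using Nat.strong_induction_on with
  | _ d ih =>
    intro p hp hd n hn
    by_cases h0 : p.natDegree = 0
    · obtain ⟨a, rfl⟩ := natDegree_eq_zero.1 h0
      rw [aeval_C, ← Algebra.smul_def] at hn
      exact ⟨n, (smul_eq_zero.1 hn).resolve_left (C_ne_zero.1 hp)⟩
    · exact ih _ (hd ▸ natDegree_derivative_lt h0) _ (mt derivative_eq_zero.1 h0) rfl _
        (aeval_derivative_mul_lie_pow_eq_zero h hn)

end Commutator

section LinearAlgebra

variable {R E ι : Type*}

theorem pow_eq_zero_of_isNilpotent_of_finrank_le {K : Type*} [Field K] [AddCommGroup E]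
    [Module K E] [FiniteDimensional K E] {T : Module.End K E} (hT : IsNilpotent T) {n : ℕ}
    (hn : Module.finrank K E ≤ n) : T ^ n = 0 := by
  have hchar := LinearMap.aeval_self_charpoly T
  rw [hT.charpoly_eq_X_pow_finrank, map_pow, Polynomial.aeval_X] at hchar
  exact pow_eq_zero_of_le hn hchar

theorem exists_ne_zero_forall_apply_eq_zero [Semiring R] [AddCommMonoid E] [Module R E]
    [IsArtinian R E] [Nontrivial E] {T : ι → Module.End R E} (hcomm : ∀ i j, Commute (T i) (T j))
    (hnil : ∀ i, IsNilpotent (T i)) : ∃ v ≠ 0, ∀ i, T i v = 0 := by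
  obtain ⟨F, ⟨hF0, hFT⟩, hmin⟩ := IsArtinian.set_has_minimal
    {F : Submodule R E | F ≠ ⊥ ∧ ∀ i, ∀ v ∈ F, T i v ∈ F} ⟨⊤, top_ne_bot, fun _ _ _ => mem_top⟩
  obtain ⟨v, hvF, hv0⟩ := exists_mem_ne_zero_of_ne_bot hF0
  refine ⟨v, hv0, fun i => ?_⟩
  have hker : F ⊓ LinearMap.ker (T i) ≠ ⊥ := by
    intro hbot
    have hpow : ∀ n, (T i ^ n) v ∈ F ∧ (T i ^ n) v ≠ 0 := by
      intro n
      induction n with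
      | zero => exact ⟨hvF, hv0⟩
      | succ n ih =>
        rw [pow_succ', Module.End.mul_apply]
        exact ⟨hFT i _ ih.1, fun h => ih.2 (eq_bot_iff.1 hbot ⟨ih.1, h⟩)⟩
    obtain ⟨n, hn⟩ := hnil i
    exact (hpow n).2 (by rw [hn, LinearMap.zero_apply])
  have hstable : ∀ j, ∀ w ∈ F ⊓ LinearMap.ker (T i), T j w ∈ F ⊓ LinearMap.ker (T i) := by
    rintro j w ⟨hw, hw'⟩
    refine ⟨hFT j w hw, ?_⟩
    rw [SetLike.mem_coe, LinearMap.mem_ker, ← Module.End.mul_apply, (hcomm i j).eq,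
      Module.End.mul_apply, show T i w = 0 from hw', map_zero]
  have hle : F ≤ LinearMap.ker (T i) := by
    by_contra hlt
    exact hmin _ ⟨hker, hstable⟩ (inf_lt_left.2 hlt)
  exact hle hvF

end LinearAlgebra

section Radical

variable {R S : Type*} [CommRing R] [CommRing S] [Algebra R S] [Algebra ℚ S] {I : Ideal S}
  {δ : Derivation R S S}

theorem pow_mul_derivation_pow_mem (hI : ∀ f ∈ I, δ f ∈ I) {f : S} {r j : ℕ}
    (h : f ^ (r + 1) * δ f ^ j ∈ I) : f ^ r * δ f ^ (j + 2) ∈ I := by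
  have hmul : ((r + 1 : ℕ) : S) * (f ^ r * δ f ^ (j + 2)) ∈ I := by
    have hsub := I.sub_mem (I.mul_mem_left (δ f) (hI _ h)) (I.mul_mem_left (j * δ (δ f)) h)
    convert hsub using 1
    rw [Derivation.leibniz, Derivation.leibniz_pow, Derivation.leibniz_pow]
    rcases j with _ | j <;> simp only [smul_eq_mul, nsmul_eq_mul, Nat.add_sub_cancel] <;>
      push_cast <;> ring
  have hinv := I.mul_mem_left (algebraMap ℚ S ((r + 1 : ℕ) : ℚ)⁻¹) hmul
  rwa [← mul_assoc, ← map_natCast (algebraMap ℚ S), ← map_mul,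
    inv_mul_cancel₀ (Nat.cast_ne_zero.2 r.succ_ne_zero), map_one, one_mul] at hinv

theorem derivation_mem_radical (hI : ∀ f ∈ I, δ f ∈ I) {f : S} (hf : f ∈ I.radical) :
    δ f ∈ I.radical := by
  have hpow : ∀ r j : ℕ, f ^ r * δ f ^ j ∈ I → δ f ∈ I.radical := by
    intro r
    induction r with
    | zero => exact fun j h => ⟨j, by simpa using h⟩
    | succ r ih => exact fun j h => ih _ (pow_mul_derivation_pow_mem hI h)
  obtain ⟨n, hn⟩ := hf
  exact hpow n 0 (by simpa using hn)

end Radical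

section QuadraticRelations

variable {Q : Type*} [CommRing Q] {x : ℤ → Q}

theorem apply_one_mul_apply_neg_one (hx : IsRegular (x 2))
    (heven : ∀ m k : ℤ, x (m + k) * x (-m) = x m * x (k - m))
    (hspec : x 3 * x (-1) = x 2 * x 0) : x 1 * x (-1) = x 0 * x 0 := by
  have h1 : x 2 * x (-1) = x 1 * x 0 := by simpa using heven 1 1
  have h2 : x 3 * x (-1) = x 1 * x 1 := by simpa using heven 1 2
  apply hx.right
  linear_combination x 1 * h1 + x 0 * (hspec - h2)

theorem apply_mul_apply_one (hx : ∀ k, IsRegular (x k))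
    (heven : ∀ m k : ℤ, x (m + k) * x (-m) = x m * x (k - m))
    (hspec : x 3 * x (-1) = x 2 * x 0) (a : ℤ) : x a * x 1 = x 0 * x (a + 1) := by
  have hneg := apply_one_mul_apply_neg_one (hx 2) heven hspec
  have hrec : ∀ k : ℤ, x 0 * x 0 * x (k + 1) = x 1 * x 1 * x (k - 1) := by
    intro k
    have h := heven 1 k
    rw [add_comm 1 k] at h
    linear_combination x 1 * h - x (k + 1) * hneg
  induction a using Int.induction_on with
  | zero => rw [zero_add]
  | succ n ih =>
    apply (hx 0).right
    have h := hrec (n + 1)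
    rw [add_sub_cancel_right] at h
    linear_combination (-x 1) * ih - h
  | pred n ih =>
    apply (hx 1).right
    have h := hrec (-n)
    rw [sub_add_cancel]
    linear_combination (-x 0) * ih - h

theorem apply_mul_apply_eq (hx : ∀ k, IsRegular (x k))
    (heven : ∀ m k : ℤ, x (m + k) * x (-m) = x m * x (k - m))
    (hspec : x 3 * x (-1) = x 2 * x 0) (a b : ℤ) : x a * x b = x 0 * x (a + b) := by
  have hone := apply_mul_apply_one hx heven hspec
  induction b using Int.induction_on with
  | zero => rw [add_zero, mul_comm]
  | succ n ih =>
    apply (hx 0).right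
    have h := hone (a + n)
    rw [add_assoc] at h
    linear_combination x 1 * ih - x a * hone n + x 0 * h
  | pred n ih =>
    apply (hx 1).right
    have h := hone (-n - 1)
    have h' := hone (a + (-n - 1))
    rw [sub_add_cancel] at h
    rw [add_assoc, sub_add_cancel] at h'
    linear_combination x 0 * ih + x a * h - x 0 * h'

end QuadraticRelations

section IndependentFamily

theorem inf_span_image_le_span_image_inter {R E ι κ : Type*} [Ring R] [AddCommGroup E] [Module R E]
    {A : κ → Submodule R E} (hA : iSupIndep A) {x : ι → E} {f : ι → κ} (hx : ∀ i, x i ∈ A (f i))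
    (s : Set ι) (j : κ) : A j ⊓ span R (x '' s) ≤ span R (x '' (s ∩ {i | f i = j})) := by
  have hin : span R (x '' (s ∩ {i | f i = j})) ≤ A j := by
    rw [span_le]
    rintro _ ⟨i, ⟨-, rfl⟩, rfl⟩
    exact hx i
  have hout : span R (x '' (s \ {i | f i = j})) ≤ ⨆ k ≠ j, A k := by
    rw [span_le]
    rintro _ ⟨i, ⟨-, hi⟩, rfl⟩
    exact mem_iSup_of_mem (f i) (mem_iSup_of_mem hi (hx i))
  calc A j ⊓ span R (x '' s)
      = (span R (x '' (s ∩ {i | f i = j})) ⊔ span R (x '' (s \ {i | f i = j}))) ⊓ A j := by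
        rw [← span_union, ← Set.image_union, Set.inter_union_sdiff, inf_comm]
    _ = span R (x '' (s ∩ {i | f i = j})) ⊔ span R (x '' (s \ {i | f i = j})) ⊓ A j :=
        (sup_inf_assoc_of_le _ hin)
    _ ≤ span R (x '' (s ∩ {i | f i = j})) := by
        rw [((hA j).mono_right hout).symm.eq_bot, sup_bot_eq]

end IndependentFamily

section VectorFields

variable {E : Type*} [AddCommGroup E] [Module ℂ E]

/-- The commutation relations of the vector fields `(t ^ k - 1) t d/dt`, which vanish at `t = 1`. -/
structure IsVanishingVectorFieldRep (D : ℤ → Module.End ℂ E) : Prop where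
  map_zero : D 0 = 0
  lie (k l : ℤ) : ⁅D k, D l⁆ = ((l : ℂ) - k) • D (k + l) - (l : ℂ) • D l + (k : ℂ) • D k

theorem exists_hasEigenvalue_forall_re_le [FiniteDimensional ℂ E] [Nontrivial E]
    (T : Module.End ℂ E) :
    ∃ μ, T.HasEigenvalue μ ∧ ∀ ν, T.HasEigenvalue ν → ν.re ≤ μ.re :=
  Set.exists_max_image {μ | T.HasEigenvalue μ} Complex.re T.finite_hasEigenvalue
    T.exists_eigenvalue

namespace IsVanishingVectorFieldRep

variable {D : ℤ → Module.End ℂ E}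

theorem comp_neg (hD : IsVanishingVectorFieldRep D) :
    IsVanishingVectorFieldRep fun k => -D (-k) where
  map_zero := by rw [neg_zero, hD.map_zero, neg_zero]
  lie k l := by
    have h := hD.lie (-k) (-l)
    rw [← neg_add, Ring.lie_def] at h
    rw [Ring.lie_def, neg_mul_neg, neg_mul_neg, h]
    push_cast
    module

/-- If `D (-n) v` differed from `-nμ v`, the difference would be an eigenvector of `D 1` for the
eigenvalue `μ + n`. -/
theorem apply_neg_natCast (hD : IsVanishingVectorFieldRep D) {μ : ℂ} {v : E}
    (hv : D 1 v = μ • v) (hμ : ∀ ν, (D 1).HasEigenvalue ν → ν.re ≤ μ.re) (n : ℕ) :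
    D (-n) v = (-(n * μ)) • v := by
  induction n with
  | zero => simp [hD.map_zero]
  | succ n ih =>
    set w := D (-(n + 1 : ℕ)) v + ((n + 1) * μ) • v with hw
    have hDw : D 1 w = (μ + n + 1) • w := by
      have h := LinearMap.congr_fun (hD.lie 1 (-(n + 1 : ℕ))) v
      rw [show (1 : ℤ) + -(n + 1 : ℕ) = -(n : ℤ) by push_cast; ring] at h
      simp only [Ring.lie_def, LinearMap.sub_apply, LinearMap.add_apply, LinearMap.smul_apply,
        Module.End.mul_apply, ih, hv, map_smul, sub_eq_iff_eq_add] at h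
      rw [hw, map_add, map_smul, hv, h]
      push_cast
      module
    have hw0 : w = 0 := by
      by_contra hne
      have hle := hμ _ (Module.End.hasEigenvalue_of_hasEigenvector
        ⟨Module.End.mem_eigenspace_iff.2 hDw, hne⟩)
      simp only [Complex.add_re, Complex.natCast_re, Complex.one_re] at hle
      linarith [n.cast_nonneg (α := ℝ)]
    rw [eq_neg_of_add_eq_zero_left hw0, ← neg_smul]
    push_cast
    rfl

theorem exists_forall_apply_eq_smul [FiniteDimensional ℂ E] [Nontrivial E]
    (hD : IsVanishingVectorFieldRep D) :
    ∃ (μ : ℂ) (v : E), v ≠ 0 ∧ ∀ k : ℤ, D k v = (k * μ) • v := by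
  obtain ⟨μ, hμ, hmax⟩ := exists_hasEigenvalue_forall_re_le (D 1)
  obtain ⟨v, hv⟩ := hμ.exists_hasEigenvector
  have hdown := hD.apply_neg_natCast hv.apply_eq_smul hmax
  have hmax' : ∀ ν, (-D (-1)).HasEigenvalue ν → ν.re ≤ μ.re := by
    obtain ⟨ρ, hρ, hρmax⟩ := exists_hasEigenvalue_forall_re_le (-D (-1))
    obtain ⟨w, hw⟩ := hρ.exists_hasEigenvector
    have hw1 : D 1 w = ρ • w := by
      simpa using hD.comp_neg.apply_neg_natCast hw.apply_eq_smul hρmax 1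
    exact fun ν hν => (hρmax ν hν).trans (hmax ρ (Module.End.hasEigenvalue_of_hasEigenvector
      ⟨Module.End.mem_eigenspace_iff.2 hw1, hw.2⟩))
  have hup := hD.comp_neg.apply_neg_natCast (v := v) (by simpa using congrArg Neg.neg (hdown 1))
    hmax'
  refine ⟨μ, v, hv.2, fun k => ?_⟩
  obtain ⟨n, rfl | rfl⟩ := k.eq_nat_or_neg
  · simpa using hup n
  · simpa using hdown n

end IsVanishingVectorFieldRep

end VectorFields

section CommutingFamily

open scoped IsMulCommutative

/-- Evaluation of polynomials at a pairwise commuting family in a noncommutative algebra. -/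
noncomputable def commutingAeval {R A σ : Type*} [CommRing R] [Ring A] [Algebra R A] {x : σ → A}
    (hx : ∀ i j, Commute (x i) (x j)) : MvPolynomial σ R →ₐ[R] A :=
  have hcomm : ∀ a ∈ Set.range x, ∀ b ∈ Set.range x, a * b = b * a := by
    rintro _ ⟨i, rfl⟩ _ ⟨j, rfl⟩
    exact hx i j
  have := Algebra.isMulCommutative_adjoin R hcomm
  (Algebra.adjoin R (Set.range x)).val.comp
    (MvPolynomial.aeval fun i => ⟨x i, Algebra.subset_adjoin ⟨i, rfl⟩⟩)

@[simp]
theorem commutingAeval_X {R A σ : Type*} [CommRing R] [Ring A] [Algebra R A] {x : σ → A}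
    (hx : ∀ i j, Commute (x i) (x j)) (i : σ) :
    commutingAeval hx (MvPolynomial.X i : MvPolynomial σ R) = x i := by
  simp [commutingAeval]

end CommutingFamily

/-- A `ℤ`-graded module `⨁ W j` of bounded finite dimension over the centerless
Heisenberg–Virasoro algebra, on which `h 0` acts by a nonzero scalar `s` and `d 0` by `lam + j` in
degree `j`. The operators are defined on an ambient space `V` and satisfy the relations there. -/
structure HeisenbergVirasoroModule (V : Type*) [AddCommGroup V] [Module ℂ V] where
  h : ℤ → Module.End ℂ V
  d : ℤ → Module.End ℂ V
  W : ℤ → Submodule ℂ V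
  s : ℂ
  lam : ℂ
  bound : ℕ
  commute_h (m n : ℤ) : Commute (h m) (h n)
  lie_d_h (m n : ℤ) : ⁅d m, h n⁆ = (n : ℂ) • h (m + n)
  lie_d_d (m n : ℤ) : ⁅d m, d n⁆ = ((n : ℂ) - m) • d (m + n)
  h_mem (m j : ℤ) {w : V} : w ∈ W j → h m w ∈ W (j + m)
  d_mem (m j : ℤ) {w : V} : w ∈ W j → d m w ∈ W (j + m)
  h_zero (j : ℤ) {w : V} : w ∈ W j → h 0 w = s • w
  d_zero (j : ℤ) {w : V} : w ∈ W j → d 0 w = (lam + j) • w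
  s_ne_zero : s ≠ 0
  finite (j : ℤ) : FiniteDimensional ℂ (W j)
  finrank_le (j : ℤ) : Module.finrank ℂ (W j) ≤ bound

namespace HeisenbergVirasoroModule

open MvPolynomial

variable {V : Type*} [AddCommGroup V] [Module ℂ V] (M : HeisenbergVirasoroModule V)

theorem d_h (m n : ℤ) (v : V) : M.d m (M.h n v) = M.h n (M.d m v) + (n : ℂ) • M.h (m + n) v :=
  sub_eq_iff_eq_add'.1 (LinearMap.congr_fun (M.lie_d_h m n) v)

theorem d_d (m n : ℤ) (v : V) :
    M.d m (M.d n v) = M.d n (M.d m v) + ((n : ℂ) - m) • M.d (m + n) v :=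
  sub_eq_iff_eq_add'.1 (LinearMap.congr_fun (M.lie_d_d m n) v)

/-- The action of the polynomial ring in the commuting operators `h m`. -/
noncomputable def polyRep : MvPolynomial ℤ ℂ →ₐ[ℂ] Module.End ℂ V :=
  commutingAeval M.commute_h

theorem polyRep_X (m : ℤ) : M.polyRep (X m) = M.h m := commutingAeval_X _ _

theorem commute_polyRep (f g : MvPolynomial ℤ ℂ) : Commute (M.polyRep f) (M.polyRep g) :=
  (Commute.all f g).map M.polyRep

/-- The derivation of the polynomial ring through which `d k` acts on polynomials in the `h m`. -/
noncomputable def wittDerivation (k : ℤ) :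
    Derivation ℂ (MvPolynomial ℤ ℂ) (MvPolynomial ℤ ℂ) :=
  mkDerivation ℂ fun m => (m : ℂ) • X (m + k)

theorem wittDerivation_X (k m : ℤ) : wittDerivation k (X m) = (m : ℂ) • X (m + k) :=
  mkDerivation_X _ _ _

theorem lie_d_polyRep (k : ℤ) (f : MvPolynomial ℤ ℂ) :
    ⁅M.d k, M.polyRep f⁆ = M.polyRep (wittDerivation k f) := by
  induction f using MvPolynomial.induction_on with
  | C a =>
    rw [← algebraMap_eq, Derivation.map_algebraMap, AlgHom.commutes, map_zero, Ring.lie_def,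
      (Algebra.commute_algebraMap_right a _).eq, sub_self]
  | add p q hp hq =>
    rw [map_add, map_add, map_add, ← hp, ← hq]
    simp only [Ring.lie_def]
    noncomm_ring
  | mul_X p m hp =>
    calc ⁅M.d k, M.polyRep (p * X m)⁆
        = ⁅M.d k, M.polyRep p⁆ * M.h m + M.polyRep p * ⁅M.d k, M.h m⁆ := by
          rw [map_mul, polyRep_X]; simp only [Ring.lie_def]; noncomm_ring
      _ = M.polyRep (wittDerivation k (p * X m)) := by
          rw [hp, M.lie_d_h, Derivation.leibniz, wittDerivation_X, smul_eq_mul, smul_eq_mul,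
            mul_comm (X m), map_add, map_mul, map_mul, map_smul, polyRep_X, polyRep_X,
            add_comm k m, add_comm]

/-- The polynomials in the `h m` that act by zero on every `W j`. -/
def annihilator : Ideal (MvPolynomial ℤ ℂ) where
  carrier := {f | ∀ j, ∀ w ∈ M.W j, M.polyRep f w = 0}
  add_mem' hf hg j w hw := by rw [map_add, LinearMap.add_apply, hf j w hw, hg j w hw, add_zero]
  zero_mem' _ _ _ := by rw [map_zero, LinearMap.zero_apply]
  smul_mem' c f hf j w hw := by
    rw [smul_eq_mul, map_mul, Module.End.mul_apply, hf j w hw, map_zero]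

theorem wittDerivation_mem_radical (k : ℤ) {f : MvPolynomial ℤ ℂ}
    (hf : f ∈ M.annihilator.radical) : wittDerivation k f ∈ M.annihilator.radical := by
  refine derivation_mem_radical (fun f hf j w hw => ?_) hf
  rw [← lie_d_polyRep, Ring.lie_def, LinearMap.sub_apply, Module.End.mul_apply,
    Module.End.mul_apply, hf j w hw, hf _ _ (M.d_mem k j hw), map_zero, sub_zero]

theorem smul_mem_radical_iff {c : ℂ} (hc : c ≠ 0) {f : MvPolynomial ℤ ℂ} :
    c • f ∈ M.annihilator.radical ↔ f ∈ M.annihilator.radical :=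
  (M.annihilator.radical.restrictScalars ℂ).smul_mem_iff hc

theorem mul_X_zero_sub_smul_mem_radical (f : MvPolynomial ℤ ℂ) :
    f * X 0 - M.s • f ∈ M.annihilator.radical := by
  refine Ideal.le_radical fun j w hw => ?_
  rw [map_sub, map_smul, map_mul, polyRep_X, LinearMap.sub_apply, Module.End.mul_apply,
    M.h_zero j hw, map_smul, LinearMap.smul_apply, sub_self]

theorem mul_X_zero_mem_radical_iff {f : MvPolynomial ℤ ℂ} :
    f * X 0 ∈ M.annihilator.radical ↔ f ∈ M.annihilator.radical := by
  rw [← M.smul_mem_radical_iff M.s_ne_zero (f := f)]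
  refine ⟨fun h => ?_, fun h => ?_⟩
  · simpa using sub_mem h (M.mul_X_zero_sub_smul_mem_radical f)
  · simpa using add_mem h (M.mul_X_zero_sub_smul_mem_radical f)

theorem mem_radical_of_mul_X_mem_radical (k : ℤ) {f : MvPolynomial ℤ ℂ}
    (hf : f * X k ∈ M.annihilator.radical) : f ∈ M.annihilator.radical := by
  rcases eq_or_ne k 0 with rfl | hk
  · exact M.mul_X_zero_mem_radical_iff.1 hf
  have hsq : (k : ℂ) • (f * f * X 0) ∈ M.annihilator.radical := by
    have hD := Ideal.mul_mem_left _ f (M.wittDerivation_mem_radical (-k) hf)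
    have hsub := sub_mem hD (Ideal.mul_mem_left _ (wittDerivation (-k) f) hf)
    convert hsub using 1
    rw [Derivation.leibniz, wittDerivation_X, add_neg_cancel]
    simp only [smul_eq_mul, smul_eq_C_mul]
    ring
  rw [M.smul_mem_radical_iff (Int.cast_ne_zero.2 hk), M.mul_X_zero_mem_radical_iff, ← pow_two]
    at hsq
  exact M.annihilator.radical_isRadical ⟨2, hsq⟩

/-- On each `W j` the commutator of `h (-k) * d k` with `f` commutes with `f`, so the
Kleinecke–Shirokov theorem applies. -/
theorem X_neg_mul_wittDerivation_mem_radical (k : ℤ) {f : MvPolynomial ℤ ℂ}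
    (hf : ∀ j, ∀ w ∈ M.W j, M.polyRep f w ∈ M.W j) :
    X (-k) * wittDerivation k f ∈ M.annihilator.radical := by
  set g := X (-k) * wittDerivation k f with hg
  have hlie : ⁅M.h (-k) * M.d k, M.polyRep f⁆ = M.polyRep g := by
    rw [hg, map_mul, ← lie_d_polyRep, Ring.lie_def, Ring.lie_def, polyRep_X, mul_sub,
      ← mul_assoc (M.polyRep f), ← polyRep_X, (M.commute_polyRep f _).eq]
    noncomm_ring
  refine ⟨M.bound, fun j w hw => ?_⟩
  have := M.finite j
  have hhd : ∀ x ∈ M.W j, (M.h (-k) * M.d k) x ∈ M.W j := fun x hx => by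
    simpa using M.h_mem (-k) _ (M.d_mem k j hx)
  have hgW : ∀ x ∈ M.W j, M.polyRep g x ∈ M.W j := fun x hx => by
    rw [← hlie]
    exact sub_mem (hhd _ (hf j x hx)) (hf j _ (hhd x hx))
  have hrestrict : ⁅(M.h (-k) * M.d k).restrict hhd, (M.polyRep f).restrict (hf j)⁆ =
      (M.polyRep g).restrict hgW :=
    LinearMap.ext fun x => Subtype.ext (LinearMap.congr_fun hlie x)
  have hcomm : Commute ((M.polyRep g).restrict hgW) ((M.polyRep f).restrict (hf j)) :=
    LinearMap.ext fun x => Subtype.ext (LinearMap.congr_fun (M.commute_polyRep g f).eq x)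
  have hnil : IsNilpotent ((M.polyRep g).restrict hgW) := by
    rw [← hrestrict] at hcomm ⊢
    exact isNilpotent_lie_of_isIntegral (K := ℂ) (Algebra.IsIntegral.isIntegral _) hcomm
  have hpow := pow_eq_zero_of_isNilpotent_of_finrank_le hnil (M.finrank_le j)
  rw [Module.End.pow_restrict] at hpow
  rw [map_pow]
  exact congrArg Subtype.val (LinearMap.congr_fun hpow ⟨w, hw⟩)

theorem X_mul_X_sub_mem_radical (m k : ℤ) :
    X (m + k) * X (-m) - X m * X (k - m) ∈ M.annihilator.radical := by
  rcases eq_or_ne m 0 with rfl | hm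
  · convert M.annihilator.radical.zero_mem using 1
    simp only [zero_add, neg_zero, sub_zero]
    ring
  apply M.mem_radical_of_mul_X_mem_radical (-k)
  rw [← M.smul_mem_radical_iff (c := m) (Int.cast_ne_zero.2 hm)]
  have hdeg : ∀ j, ∀ w ∈ M.W j, M.polyRep (X m * X (-m)) w ∈ M.W j := fun j w hw => by
    rw [map_mul, polyRep_X, polyRep_X]
    simpa using M.h_mem m _ (M.h_mem (-m) j hw)
  convert M.X_neg_mul_wittDerivation_mem_radical k hdeg using 1
  rw [Derivation.leibniz, wittDerivation_X, wittDerivation_X, neg_add_eq_sub]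
  simp only [smul_eq_mul, smul_eq_C_mul, Int.cast_neg, map_neg]
  ring

theorem X_three_mul_X_neg_one_sub_mem_radical :
    X 3 * X (-1) - X 2 * X 0 ∈ M.annihilator.radical := by
  have h := M.wittDerivation_mem_radical 1 (M.X_mul_X_sub_mem_radical 1 1)
  rw [← M.smul_mem_radical_iff (c := 2) two_ne_zero]
  convert h using 1
  rw [map_sub, Derivation.leibniz, Derivation.leibniz]
  simp only [wittDerivation_X, smul_eq_mul]
  norm_num [smul_eq_C_mul, show (C 2 : MvPolynomial ℤ ℂ) = 2 from rfl]
  ring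

theorem X_mul_X_sub_X_zero_mul_X_mem_radical (a b : ℤ) :
    X a * X b - X 0 * X (a + b) ∈ M.annihilator.radical := by
  let x : ℤ → MvPolynomial ℤ ℂ ⧸ M.annihilator.radical := fun k => Ideal.Quotient.mk _ (X k)
  have hregular : ∀ k, IsRegular (x k) := by
    intro k
    rw [isRegular_iff_mem_nonZeroDivisors, mem_nonZeroDivisors_iff_right]
    intro y hy
    obtain ⟨f, rfl⟩ := Ideal.Quotient.mk_surjective y
    rw [← map_mul, Ideal.Quotient.eq_zero_iff_mem] at hy
    exact Ideal.Quotient.eq_zero_iff_mem.2 (M.mem_radical_of_mul_X_mem_radical k hy)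
  exact Ideal.Quotient.eq.1 (apply_mul_apply_eq hregular
    (fun m k => Ideal.Quotient.eq.2 (M.X_mul_X_sub_mem_radical m k))
    (Ideal.Quotient.eq.2 M.X_three_mul_X_neg_one_sub_mem_radical) a b)

/-- The failure of `k ↦ s⁻¹ • h k` to be multiplicative. -/
def defect (a b : ℤ) : Module.End ℂ V := M.h a * M.h b - M.s • M.h (a + b)

theorem exists_forall_defect_pow_apply_eq_zero (a b : ℤ) :
    ∃ n : ℕ, ∀ j, ∀ w ∈ M.W j, (M.defect a b ^ n) w = 0 := by
  have hmem : X a * X b - M.s • X (a + b) ∈ M.annihilator.radical := by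
    convert add_mem (M.X_mul_X_sub_X_zero_mul_X_mem_radical a b)
      (M.mul_X_zero_sub_smul_mem_radical (X (a + b))) using 1
    ring
  obtain ⟨n, hn⟩ := hmem
  refine ⟨n, fun j w hw => ?_⟩
  simpa only [map_pow, map_sub, map_mul, map_smul, polyRep_X, defect] using hn j w hw

theorem eq_zero_of_h_apply_eq_zero (k j : ℤ) {w : V} (hw : w ∈ M.W j) (h : M.h k w = 0) :
    w = 0 := by
  have hdefect : M.defect (-k) k w = (-(M.s * M.s)) • w := by
    rw [defect, LinearMap.sub_apply, Module.End.mul_apply, h, map_zero, neg_add_cancel,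
      LinearMap.smul_apply, M.h_zero j hw, smul_smul, zero_sub, neg_smul]
  have hpow : ∀ n : ℕ, (M.defect (-k) k ^ n) w = (-(M.s * M.s)) ^ n • w := fun n => by
    induction n with
    | zero => simp
    | succ n ih => rw [pow_succ, Module.End.mul_apply, hdefect, map_smul, ih, smul_smul, pow_succ']
  obtain ⟨n, hn⟩ := M.exists_forall_defect_pow_apply_eq_zero (-k) k
  have h0 := hn j w hw
  rw [hpow] at h0
  exact (smul_eq_zero.1 h0).resolve_left
    (pow_ne_zero _ (neg_ne_zero.2 (mul_self_ne_zero.2 M.s_ne_zero)))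

theorem commute_h_defect (k a b : ℤ) : Commute (M.h k) (M.defect a b) :=
  ((M.commute_h k a).mul_right (M.commute_h k b)).sub_right ((M.commute_h k _).smul_right _)

theorem commute_defect_defect (a b c e : ℤ) : Commute (M.defect a b) (M.defect c e) :=
  ((M.commute_h_defect a c e).mul_left (M.commute_h_defect b c e)).sub_left
    ((M.commute_h_defect _ c e).smul_left _)

theorem defect_mem (a b : ℤ) {j : ℤ} {w : V} (hw : w ∈ M.W j) :
    M.defect a b w ∈ M.W (j + (a + b)) := by
  have hab := M.h_mem a _ (M.h_mem b j hw)
  rw [show j + b + a = j + (a + b) by ring] at hab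
  exact sub_mem hab (smul_mem _ _ (M.h_mem (a + b) j hw))

/-- The vectors of degree `j` on which `k ↦ s⁻¹ • h k` is multiplicative. -/
def groupLike (j : ℤ) : Submodule ℂ V := M.W j ⊓ ⨅ a, ⨅ b, LinearMap.ker (M.defect a b)

theorem mem_groupLike {j : ℤ} {w : V} :
    w ∈ M.groupLike j ↔ w ∈ M.W j ∧ ∀ a b, M.h a (M.h b w) = M.s • M.h (a + b) w := by
  simp only [groupLike, mem_inf, mem_iInf, LinearMap.mem_ker, defect, LinearMap.sub_apply,
    LinearMap.smul_apply, Module.End.mul_apply, sub_eq_zero]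

theorem h_mem_groupLike (m : ℤ) {j : ℤ} {w : V} (hw : w ∈ M.groupLike j) :
    M.h m w ∈ M.groupLike (j + m) := by
  rw [mem_groupLike] at hw ⊢
  have hcomm : ∀ (a : ℤ) (v : V), M.h a (M.h m v) = M.h m (M.h a v) := fun a v =>
    LinearMap.congr_fun (M.commute_h a m).eq v
  exact ⟨M.h_mem m j hw.1, fun a b => by rw [hcomm b, hcomm a, hw.2, map_smul, hcomm]⟩

theorem d_mem_groupLike (m : ℤ) {j : ℤ} {w : V} (hw : w ∈ M.groupLike j) :
    M.d m w ∈ M.groupLike (j + m) := by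
  rw [mem_groupLike] at hw ⊢
  refine ⟨M.d_mem m j hw.1, fun a b => ?_⟩
  have hd : M.d m (M.h a (M.h b w)) = M.s • M.d m (M.h (a + b) w) := by rw [hw.2, map_smul]
  rw [d_h, d_h, d_h, map_add, map_smul, hw.2, hw.2, ← add_assoc, add_comm a m,
    add_assoc m a b] at hd
  push_cast at hd
  linear_combination (norm := module) hd

theorem groupLike_zero_ne_bot (h0 : M.W 0 ≠ ⊥) : M.groupLike 0 ≠ ⊥ := by
  have := M.finite 0
  have : Nontrivial (M.W 0) := nontrivial_iff_ne_bot.2 h0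
  let T : ℤ × ℤ → Module.End ℂ V := fun p => M.h (-(p.1 + p.2)) * M.defect p.1 p.2
  have hT : ∀ p, ∀ w ∈ M.W 0, T p w ∈ M.W 0 := fun p w hw => by
    have h := M.h_mem (-(p.1 + p.2)) _ (M.defect_mem p.1 p.2 hw)
    rwa [add_neg_cancel_right] at h
  have hcomm : ∀ p q, Commute (T p) (T q) := fun p q =>
    ((M.commute_h _ _).mul_right (M.commute_h_defect _ _ _)).mul_left
      ((M.commute_h_defect _ _ _).symm.mul_right (M.commute_defect_defect _ _ _ _))
  have hnil : ∀ p, IsNilpotent ((T p).restrict (hT p)) := by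
    intro p
    obtain ⟨n, hn⟩ := M.exists_forall_defect_pow_apply_eq_zero p.1 p.2
    refine ⟨n, ?_⟩
    rw [Module.End.pow_restrict]
    ext w
    rw [LinearMap.coe_restrict_apply, (M.commute_h_defect _ _ _).mul_pow, Module.End.mul_apply,
      hn 0 w w.2, map_zero]
    rfl
  obtain ⟨⟨w, hw⟩, hw0, hTw⟩ := exists_ne_zero_forall_apply_eq_zero
    (fun p q => LinearMap.ext fun x => Subtype.ext (LinearMap.congr_fun (hcomm p q).eq x)) hnil
  refine (Submodule.ne_bot_iff _).2
    ⟨w, M.mem_groupLike.2 ⟨hw, fun a b => ?_⟩, fun h => hw0 (Subtype.ext h)⟩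
  exact sub_eq_zero.1 (M.eq_zero_of_h_apply_eq_zero _ _ (M.defect_mem a b hw)
    (congrArg Subtype.val (hTw (a, b))))

/-- The operator by which the vector field `(t ^ k - 1) t d/dt` acts on `groupLike 0`. -/
noncomputable def vanishingVectorField (k : ℤ) : Module.End ℂ V :=
  M.s⁻¹ • (M.h (-k) * M.d k) - M.lam • 1

theorem vanishingVectorField_apply (k : ℤ) (v : V) :
    M.vanishingVectorField k v = M.s⁻¹ • M.h (-k) (M.d k v) - M.lam • v := rfl

theorem vanishingVectorField_mem (k : ℤ) {w : V} (hw : w ∈ M.groupLike 0) :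
    M.vanishingVectorField k w ∈ M.groupLike 0 := by
  have h := M.h_mem_groupLike (-k) (M.d_mem_groupLike k hw)
  rw [add_neg_cancel_right] at h
  exact sub_mem (smul_mem _ _ h) (smul_mem _ _ hw)

theorem isVanishingVectorFieldRep :
    IsVanishingVectorFieldRep fun k =>
      (M.vanishingVectorField k).restrict fun _ => M.vanishingVectorField_mem k where
  map_zero := by
    ext ⟨w, hw⟩
    rw [LinearMap.coe_restrict_apply, vanishingVectorField_apply, M.d_zero 0 hw.1, map_smul,
      neg_zero, M.h_zero 0 hw.1, Int.cast_zero, add_zero, smul_comm, inv_smul_smul₀ M.s_ne_zero,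
      sub_self]
    rfl
  lie k l := by
    ext ⟨w, hw⟩
    have hs := M.s_ne_zero
    have hmul : ∀ k l : ℤ, M.h (-k) (M.d k (M.h (-l) (M.d l w))) =
        M.s • M.h (-(k + l)) (M.d k (M.d l w)) - ((l : ℂ) * M.s) • M.h (-l) (M.d l w) := by
      intro k l
      have hl := M.d_mem_groupLike l hw
      have h1 := (M.mem_groupLike.1 (M.d_mem_groupLike k hl)).2 (-k) (-l)
      have h2 := (M.mem_groupLike.1 hl).2 (-k) (k + -l)
      rw [d_h, map_add, map_smul, h1, h2, neg_add_cancel_left, neg_add]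
      push_cast
      module
    simp only [Ring.lie_def, LinearMap.coe_restrict_apply, Submodule.coe_sub, Submodule.coe_add,
      Submodule.coe_smul, LinearMap.sub_apply, LinearMap.add_apply, LinearMap.smul_apply,
      Module.End.mul_apply, vanishingVectorField_apply, map_sub, map_smul]
    rw [hmul k l, hmul l k, M.d_d k l, map_add, map_smul, add_comm l k]
    match_scalars <;> field_simp <;> ring

theorem exists_mem_groupLike_forall_d_apply_eq (h0 : M.W 0 ≠ ⊥) :
    ∃ μ : ℂ, ∃ v ∈ M.groupLike 0, v ≠ 0 ∧
      ∀ k : ℤ, M.d k v = (M.s⁻¹ * (M.lam + k * μ)) • M.h k v := by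
  have := M.finite 0
  have : FiniteDimensional ℂ (M.groupLike 0) := finiteDimensional_of_le inf_le_left
  have : Nontrivial (M.groupLike 0) := nontrivial_iff_ne_bot.2 (M.groupLike_zero_ne_bot h0)
  obtain ⟨μ, ⟨v, hv⟩, hv0, hμ⟩ := M.isVanishingVectorFieldRep.exists_forall_apply_eq_smul
  refine ⟨μ, v, hv, fun h => hv0 (Subtype.ext h), fun k => ?_⟩
  have hhd : M.h (-k) (M.d k v) = M.s • (M.lam + k * μ) • v := by
    have h := congrArg Subtype.val (hμ k)
    rw [LinearMap.coe_restrict_apply, vanishingVectorField_apply, sub_eq_iff_eq_add,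
      inv_smul_eq_iff₀ M.s_ne_zero] at h
    rw [h, Submodule.coe_smul, add_smul, add_comm]
  have hd := M.mem_groupLike.1 (M.d_mem_groupLike k hv)
  have hmul := congrArg (M.h k) hhd
  rw [hd.2, add_neg_cancel, M.h_zero _ hd.1, map_smul, map_smul] at hmul
  rw [mul_smul, ← smul_right_injective V M.s_ne_zero hmul, inv_smul_smul₀ M.s_ne_zero]

theorem exists_intermediate_series (h0 : M.W 0 ≠ ⊥) :
    ∃ (β : ℂ) (u : ℤ → V), (∀ j, u j ∈ M.W j) ∧ u 0 ≠ 0 ∧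
      (∀ m j, M.h m (u j) = M.s • u (j + m)) ∧
      (∀ m j : ℤ, M.d m (u j) = (M.lam + j + β * m) • u (j + m)) := by
  obtain ⟨μ, v, hv, hv0, hd⟩ := M.exists_mem_groupLike_forall_d_apply_eq h0
  have hs := M.s_ne_zero
  have hmul := (M.mem_groupLike.1 hv).2
  refine ⟨μ, fun j => M.s⁻¹ • M.h j v, fun j => ?_, ?_, fun m j => ?_, fun m j => ?_⟩
  · simpa using smul_mem _ M.s⁻¹ (M.h_mem j 0 hv.1)
  · beta_reduce
    rwa [M.h_zero 0 hv.1, inv_smul_smul₀ hs]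
  · beta_reduce
    rw [map_smul, hmul, add_comm m j, smul_comm]
  · beta_reduce
    rw [map_smul, d_h, hd, map_smul, hmul, add_comm m j]
    match_scalars
    field_simp
    ring

end HeisenbergVirasoroModule

namespace RamondRep

variable {V : Type} [AddCommGroup V] [Module ℂ V]

section Relations

variable (ρ : RamondRep V)

/-- Compute the commutator of `L 2` with the relation for `G⁺ 0` and `G⁻ (-2)`, which has no central
term, and compare with the relation for `G⁺ 2` and `G⁻ (-2)`. -/
theorem c₀_smul (v : V) : ρ.c₀ • v = 0 := by
  have hL := ρ.rel_GpGm 0 (-2) (ρ.L 2 v)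
  have hL' := congrArg (ρ.L 2) (ρ.rel_GpGm 0 (-2) v)
  have hGp := ρ.rel_LGp 2 0 (ρ.Gm (-2) v)
  have hGp' := congrArg (ρ.Gm (-2)) (ρ.rel_LGp 2 0 v)
  have hGm := ρ.rel_LGm 2 (-2) (ρ.Gp 0 v)
  have hGm' := congrArg (ρ.Gp 0) (ρ.rel_LGm 2 (-2) v)
  have h2 := ρ.rel_GpGm 2 (-2) v
  have h0 := ρ.rel_GpGm 0 0 v
  have hLL := ρ.rel_LL 2 (-2) v
  have hLH := ρ.rel_LH 2 (-2) v
  norm_num at hL hL' hGp hGp' hGm hGm' h2 h0 hLL hLH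
  have h : (2 : ℂ) • ρ.c₀ • v = 0 := by
    linear_combination (norm := module) hL - hL' + hGp + hGp' + hGm + hGm' - h2 - (3 : ℂ) • h0
      + (2 : ℂ) • hLL - (2 : ℂ) • hLH
  exact (smul_eq_zero.1 h).resolve_left two_ne_zero

/-- The operators `L n - (n / 2) H n`, which satisfy the Witt relations and, unlike the `L n`,
commute with the `G⁻ p` in the way vector fields act on functions. -/
noncomputable def d (n : ℤ) : V →ₗ[ℂ] V := ρ.L n - ((n : ℂ) / 2) • ρ.H n

theorem d_apply (n : ℤ) (v : V) : ρ.d n v = ρ.L n v - ((n : ℂ) / 2) • ρ.H n v := rfl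

theorem L_apply (n : ℤ) (v : V) : ρ.L n v = ρ.d n v + ((n : ℂ) / 2) • ρ.H n v := by
  rw [d_apply, sub_add_cancel]

theorem d_zero_apply (v : V) : ρ.d 0 v = ρ.L 0 v := by
  rw [d_apply, Int.cast_zero, zero_div, zero_smul, sub_zero]

theorem H_H (m n : ℤ) (v : V) : ρ.H m (ρ.H n v) = ρ.H n (ρ.H m v) := by
  have h := ρ.rel_HH m n v
  rw [mul_smul, c₀_smul, smul_zero] at h
  exact sub_eq_zero.1 h

theorem d_H (m n : ℤ) (v : V) :
    ρ.d m (ρ.H n v) = ρ.H n (ρ.d m v) + (n : ℂ) • ρ.H (m + n) v := by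
  simp only [d_apply, map_sub, map_smul]
  linear_combination (norm := module) ρ.rel_LH m n v - ((m : ℂ) / 2) • ρ.H_H m n v

theorem d_d (m n : ℤ) (v : V) :
    ρ.d m (ρ.d n v) = ρ.d n (ρ.d m v) + ((n : ℂ) - m) • ρ.d (m + n) v := by
  have hLL := ρ.rel_LL m n v
  have hLH := ρ.rel_LH n m v
  rw [mul_smul, c₀_smul, smul_zero, add_zero] at hLL
  rw [add_comm n m] at hLH
  simp only [d_apply, map_sub, map_smul, Int.cast_add]
  linear_combination (norm := module) hLL - ((n : ℂ) / 2) • ρ.rel_LH m n v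
    + ((m : ℂ) / 2) • hLH + ((m : ℂ) * n / 4) • ρ.H_H m n v

theorem H_Gp (m p : ℤ) (v : V) : ρ.H m (ρ.Gp p v) = ρ.Gp p (ρ.H m v) + ρ.Gp (p + m) v := by
  rw [add_comm p m]
  exact sub_eq_iff_eq_add'.1 (ρ.rel_HGp m p v)

theorem H_Gm (m p : ℤ) (v : V) : ρ.H m (ρ.Gm p v) = ρ.Gm p (ρ.H m v) - ρ.Gm (p + m) v := by
  rw [add_comm p m, sub_eq_add_neg]
  exact sub_eq_iff_eq_add'.1 (ρ.rel_HGm m p v)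

theorem d_Gp (m p : ℤ) (v : V) :
    ρ.d m (ρ.Gp p v) = ρ.Gp p (ρ.d m v) + ((p : ℂ) - m) • ρ.Gp (p + m) v := by
  simp only [d_apply, map_sub, map_smul]
  linear_combination (norm := module) ρ.rel_LGp m p v - ((m : ℂ) / 2) • ρ.H_Gp m p v

theorem d_Gm (m p : ℤ) (v : V) :
    ρ.d m (ρ.Gm p v) = ρ.Gm p (ρ.d m v) + (p : ℂ) • ρ.Gm (p + m) v := by
  simp only [d_apply, map_sub, map_smul]
  linear_combination (norm := module) ρ.rel_LGm m p v - ((m : ℂ) / 2) • ρ.H_Gm m p v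

theorem Gm_Gp (q p : ℤ) (v : V) : ρ.Gm q (ρ.Gp p v) =
    -ρ.Gp p (ρ.Gm q v) + (-2 : ℂ) • ρ.d (p + q) v - (2 * q : ℂ) • ρ.H (p + q) v := by
  have h := ρ.rel_GpGm p q v
  rw [mul_smul, c₀_smul, smul_zero, add_zero] at h
  rw [d_apply]
  push_cast
  linear_combination (norm := module) h

theorem Gp_Gp (p q : ℤ) (v : V) : ρ.Gp p (ρ.Gp q v) = -ρ.Gp q (ρ.Gp p v) :=
  eq_neg_of_add_eq_zero_left (ρ.rel_GpGp p q v)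

theorem Gp_Gp_self (p : ℤ) (v : V) : ρ.Gp p (ρ.Gp p v) = 0 := by
  have h := ρ.rel_GpGp p p v
  rw [← two_smul ℂ] at h
  exact (smul_eq_zero.1 h).resolve_left two_ne_zero

end Relations

section Components

variable (ρ : RamondRep V)

theorem eq_zero_or_eq_one : ∀ τ : ZMod 2, τ = 0 ∨ τ = 1 := by decide

theorem parity_zero : ρ.parity 0 = ρ.even := if_pos rfl

theorem parity_one : ρ.parity 1 = ρ.odd := if_neg one_ne_zero

theorem iSupIndep_parity : iSupIndep ρ.parity :=
  (iSupIndep_pair (i := 0) (j := 1) zero_ne_one (by decide)).2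
    (by rw [parity_zero, parity_one]; exact ρ.grading.disjoint)

theorem iSupIndep_wt : iSupIndep ρ.wt := Module.End.eigenspaces_iSupIndep (ρ.L 0)

theorem eq_inf_even_sup_inf_odd {X : Submodule ℂ V} {τ : ZMod 2} (hX : X ≤ ρ.parity τ) :
    X = (X ⊓ ρ.even) ⊔ (X ⊓ ρ.odd) := by
  refine le_antisymm ?_ (sup_le inf_le_left inf_le_left)
  obtain rfl | rfl := eq_zero_or_eq_one τ
  · exact le_sup_of_le_left (le_inf le_rfl (ρ.parity_zero ▸ hX))
  · exact le_sup_of_le_right (le_inf le_rfl (ρ.parity_one ▸ hX))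

theorem L_mem_parity (m : ℤ) {τ : ZMod 2} {v : V} (hv : v ∈ ρ.parity τ) :
    ρ.L m v ∈ ρ.parity τ := by
  obtain rfl | rfl := eq_zero_or_eq_one τ
  · rw [parity_zero] at *; exact ρ.L_even m v hv
  · rw [parity_one] at *; exact ρ.L_odd m v hv

theorem H_mem_parity (m : ℤ) {τ : ZMod 2} {v : V} (hv : v ∈ ρ.parity τ) :
    ρ.H m v ∈ ρ.parity τ := by
  obtain rfl | rfl := eq_zero_or_eq_one τ
  · rw [parity_zero] at *; exact ρ.H_even m v hv
  · rw [parity_one] at *; exact ρ.H_odd m v hv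

theorem d_mem_parity (m : ℤ) {τ : ZMod 2} {v : V} (hv : v ∈ ρ.parity τ) : ρ.d m v ∈ ρ.parity τ :=
  sub_mem (ρ.L_mem_parity m hv) (smul_mem _ _ (ρ.H_mem_parity m hv))

theorem Gp_mem_parity (m : ℤ) {τ : ZMod 2} {v : V} (hv : v ∈ ρ.parity τ) :
    ρ.Gp m v ∈ ρ.parity (τ + 1) := by
  obtain rfl | rfl := eq_zero_or_eq_one τ
  · rw [zero_add, parity_one]; rw [parity_zero] at hv; exact ρ.Gp_even m v hv
  · rw [CharTwo.add_self_eq_zero, parity_zero]; rw [parity_one] at hv; exact ρ.Gp_odd m v hv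

theorem Gm_mem_parity (m : ℤ) {τ : ZMod 2} {v : V} (hv : v ∈ ρ.parity τ) :
    ρ.Gm m v ∈ ρ.parity (τ + 1) := by
  obtain rfl | rfl := eq_zero_or_eq_one τ
  · rw [zero_add, parity_one]; rw [parity_zero] at hv; exact ρ.Gm_even m v hv
  · rw [CharTwo.add_self_eq_zero, parity_zero]; rw [parity_one] at hv; exact ρ.Gm_odd m v hv

/-- The homogeneous component of `L 0`-weight `μ`, `H 0`-charge `σ` and parity `τ`. -/
noncomputable def component (μ σ : ℂ) (τ : ZMod 2) : Submodule ℂ V :=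
  ρ.wt μ ⊓ Module.End.eigenspace (ρ.H 0) σ ⊓ ρ.parity τ

theorem mem_component {μ σ : ℂ} {τ : ZMod 2} {v : V} : v ∈ ρ.component μ σ τ ↔
    ρ.L 0 v = μ • v ∧ ρ.H 0 v = σ • v ∧ v ∈ ρ.parity τ := by
  rw [component, mem_inf, mem_inf, wt, Module.End.mem_eigenspace_iff, Module.End.mem_eigenspace_iff,
    and_assoc]

theorem component_le (μ σ : ℂ) (τ : ZMod 2) : ρ.component μ σ τ ≤ ρ.wt μ ⊓ ρ.parity τ :=
  inf_le_inf_right _ inf_le_left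

theorem H_mem_component (m : ℤ) {μ σ : ℂ} {τ : ZMod 2} {v : V} (hv : v ∈ ρ.component μ σ τ) :
    ρ.H m v ∈ ρ.component (μ + m) σ τ := by
  rw [mem_component] at hv ⊢
  obtain ⟨hL, hH, hτ⟩ := hv
  refine ⟨?_, by rw [H_H, hH, map_smul], ρ.H_mem_parity m hτ⟩
  rw [← d_zero_apply, d_H, d_zero_apply, hL, map_smul, zero_add, add_smul]

theorem d_mem_component (m : ℤ) {μ σ : ℂ} {τ : ZMod 2} {v : V} (hv : v ∈ ρ.component μ σ τ) :
    ρ.d m v ∈ ρ.component (μ + m) σ τ := by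
  rw [mem_component] at hv ⊢
  obtain ⟨hL, hH, hτ⟩ := hv
  refine ⟨?_, ?_, ρ.d_mem_parity m hτ⟩
  · rw [← d_zero_apply, d_d, d_zero_apply, hL, map_smul, zero_add, Int.cast_zero, sub_zero,
      add_smul]
  · have h := ρ.d_H m 0 v
    rwa [Int.cast_zero, zero_smul, add_zero, hH, map_smul, eq_comm] at h

theorem Gp_mem_component (m : ℤ) {μ σ : ℂ} {τ : ZMod 2} {v : V} (hv : v ∈ ρ.component μ σ τ) :
    ρ.Gp m v ∈ ρ.component (μ + m) (σ + 1) (τ + 1) := by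
  rw [mem_component] at hv ⊢
  obtain ⟨hL, hH, hτ⟩ := hv
  refine ⟨?_, ?_, ρ.Gp_mem_parity m hτ⟩
  · rw [← d_zero_apply, d_Gp, d_zero_apply, hL, map_smul, add_zero, Int.cast_zero, sub_zero,
      add_smul]
  · rw [H_Gp, hH, map_smul, add_zero, add_smul, one_smul]

theorem Gm_mem_component (m : ℤ) {μ σ : ℂ} {τ : ZMod 2} {v : V} (hv : v ∈ ρ.component μ σ τ) :
    ρ.Gm m v ∈ ρ.component (μ + m) (σ - 1) (τ + 1) := by
  rw [mem_component] at hv ⊢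
  obtain ⟨hL, hH, hτ⟩ := hv
  refine ⟨?_, ?_, ρ.Gm_mem_parity m hτ⟩
  · rw [← d_zero_apply, d_Gm, d_zero_apply, hL, map_smul, add_zero, add_smul]
  · rw [H_Gm, hH, map_smul, add_zero, sub_smul, one_smul]

theorem wt_le_iSup_wt_inf_parity (μ : ℂ) : ρ.wt μ ≤ ⨆ τ, ρ.wt μ ⊓ ρ.parity τ := by
  intro v hv
  obtain ⟨a, b, ha, hb, rfl⟩ := codisjoint_iff_exists_add_eq.1 ρ.grading.codisjoint v
  have hadd : (ρ.L 0 a - μ • a) + (ρ.L 0 b - μ • b) = 0 := by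
    have h : ρ.L 0 (a + b) = μ • (a + b) := Module.End.mem_eigenspace_iff.1 hv
    rw [map_add] at h
    linear_combination (norm := module) h
  have ha' : ρ.L 0 a - μ • a = 0 := disjoint_def.1 ρ.grading.disjoint _
    (sub_mem (ρ.L_even 0 a ha) (smul_mem _ _ ha))
    (eq_neg_of_add_eq_zero_left hadd ▸ neg_mem (sub_mem (ρ.L_odd 0 b hb) (smul_mem _ _ hb)))
  rw [ha', zero_add] at hadd
  exact add_mem
    (mem_iSup_of_mem 0 ⟨Module.End.mem_eigenspace_iff.2 (sub_eq_zero.1 ha'), ρ.parity_zero ▸ ha⟩)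
    (mem_iSup_of_mem 1 ⟨Module.End.mem_eigenspace_iff.2 (sub_eq_zero.1 hadd), ρ.parity_one ▸ hb⟩)

theorem H_zero_mem_wt_inf_parity {μ : ℂ} {τ : ZMod 2} {v : V} (hv : v ∈ ρ.wt μ ⊓ ρ.parity τ) :
    ρ.H 0 v ∈ ρ.wt μ ⊓ ρ.parity τ := by
  refine ⟨Module.End.mem_eigenspace_iff.2 ?_, ρ.H_mem_parity 0 hv.2⟩
  rw [← d_zero_apply, d_H, d_zero_apply, Module.End.mem_eigenspace_iff.1 hv.1, map_smul,
    Int.cast_zero, zero_smul, add_zero]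

theorem hasEigenvalue_restrict_H_zero_iff {μ σ : ℂ} {τ : ZMod 2} :
    Module.End.HasEigenvalue
        ((ρ.H 0).restrict fun _ => ρ.H_zero_mem_wt_inf_parity (μ := μ) (τ := τ)) σ ↔
      ρ.component μ σ τ ≠ ⊥ := by
  rw [Module.End.hasEigenvalue_iff, Module.End.eigenspace, Module.End.genEigenspace_restrict,
    ← Module.End.eigenspace, ne_eq, ne_eq, ← disjoint_iff_comap_eq_bot, disjoint_iff, component,
    inf_right_comm]

end Components

section Cuspidality

variable {ρ : RamondRep V}

theorem Cuspidal.finiteDimensional (hcusp : ρ.Cuspidal) (μ : ℂ) (τ : ZMod 2) :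
    FiniteDimensional ℂ ↥(ρ.wt μ ⊓ ρ.parity τ) := by
  obtain ⟨-, p, hp⟩ := hcusp
  exact Module.rank_lt_aleph0_iff.1 ((hp μ τ).trans_lt Cardinal.natCast_lt_aleph0)

theorem Cuspidal.finiteDimensional_component (hcusp : ρ.Cuspidal) (μ σ : ℂ) (τ : ZMod 2) :
    FiniteDimensional ℂ (ρ.component μ σ τ) :=
  have := hcusp.finiteDimensional μ τ
  finiteDimensional_of_le (ρ.component_le μ σ τ)

theorem Cuspidal.finrank_component_le (hcusp : ρ.Cuspidal) (μ σ : ℂ) (τ : ZMod 2) :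
    Module.finrank ℂ (ρ.component μ σ τ) ≤ hcusp.2.choose :=
  Module.finrank_le_of_rank_le
    ((rank_mono (ρ.component_le μ σ τ)).trans (hcusp.2.choose_spec μ τ))

theorem Cuspidal.finite_setOf_component_ne_bot (hcusp : ρ.Cuspidal) (μ : ℂ) (τ : ZMod 2) :
    {σ | ρ.component μ σ τ ≠ ⊥}.Finite := by
  have := hcusp.finiteDimensional μ τ
  simp_rw [← hasEigenvalue_restrict_H_zero_iff]
  exact Module.End.finite_hasEigenvalue _

theorem Cuspidal.exists_component_ne_bot [Nontrivial V] (hcusp : ρ.Cuspidal) :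
    ∃ μ σ τ, ρ.component μ σ τ ≠ ⊥ := by
  obtain ⟨μ, τ, hne⟩ : ∃ μ τ, ρ.wt μ ⊓ ρ.parity τ ≠ ⊥ := by
    by_contra! h
    refine bot_ne_top (α := Submodule ℂ V) (hcusp.1 ▸ eq_comm.1 (eq_bot_iff.2 ?_))
    exact iSup_le fun μ => (ρ.wt_le_iSup_wt_inf_parity μ).trans (iSup_le fun τ => (h μ τ).le)
  have := hcusp.finiteDimensional μ τ
  have := nontrivial_iff_ne_bot.2 hne
  obtain ⟨σ, hσ⟩ := Module.End.exists_eigenvalue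
    ((ρ.H 0).restrict fun _ => ρ.H_zero_mem_wt_inf_parity (μ := μ) (τ := τ))
  exact ⟨μ, σ, τ, (ρ.hasEigenvalue_restrict_H_zero_iff).1 hσ⟩

/-- The components of nonzero charge `σ` and parity `τ` over a coset `lam + ℤ` of weights, as a
module over the twisted Heisenberg-Virasoro operators `H` and `d`. -/
noncomputable def Cuspidal.heisenbergVirasoroModule (hcusp : ρ.Cuspidal) (lam : ℂ) {σ : ℂ}
    (hσ : σ ≠ 0) (τ : ZMod 2) : HeisenbergVirasoroModule V where
  h := ρ.H
  d := ρ.d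
  W j := ρ.component (lam + j) σ τ
  s := σ
  lam := lam
  bound := hcusp.2.choose
  commute_h m n := LinearMap.ext (ρ.H_H m n)
  lie_d_h m n := LinearMap.ext fun v => sub_eq_iff_eq_add'.2 (ρ.d_H m n v)
  lie_d_d m n := LinearMap.ext fun v => sub_eq_iff_eq_add'.2 (ρ.d_d m n v)
  h_mem m j w hw := by
    rw [Int.cast_add, ← add_assoc]
    exact ρ.H_mem_component m hw
  d_mem m j w hw := by
    rw [Int.cast_add, ← add_assoc]
    exact ρ.d_mem_component m hw
  h_zero j w hw := (ρ.mem_component.1 hw).2.1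
  d_zero j w hw := (ρ.d_zero_apply w).trans (ρ.mem_component.1 hw).1
  s_ne_zero := hσ
  finite j := hcusp.finiteDimensional_component (lam + j) σ τ
  finrank_le j := hcusp.finrank_component_le (lam + j) σ τ

theorem Cuspidal.component_add_eq_bot (hcusp : ρ.Cuspidal) {lam σ : ℂ} (hσ : σ ≠ 0) {τ : ZMod 2}
    (h : ρ.component lam σ τ = ⊥) (j : ℤ) : ρ.component (lam + j) σ τ = ⊥ := by
  refine eq_bot_iff.2 fun w hw => ?_
  have hmem := ρ.H_mem_component (-j) hw
  rw [Int.cast_neg, add_neg_cancel_right, h] at hmem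
  exact (hcusp.heisenbergVirasoroModule lam hσ τ).eq_zero_of_h_apply_eq_zero (-j) j hw hmem

theorem Cuspidal.exists_minimal_charge (hcusp : ρ.Cuspidal) {lam σ : ℂ} {τ : ZMod 2}
    (hne : ρ.component lam σ τ ≠ ⊥) : ∃ (i : ℕ) (τ' : ZMod 2),
      ρ.component lam (σ - i) τ' ≠ ⊥ ∧ ∀ τ'', ρ.component lam (σ - i - 1) τ'' = ⊥ := by
  let I : Set ℕ := ⋃ τ', (fun i : ℕ => σ - i) ⁻¹' {σ' | ρ.component lam σ' τ' ≠ ⊥}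
  have hI : I.Finite := Set.finite_iUnion fun τ' =>
    (hcusp.finite_setOf_component_ne_bot lam τ').preimage
      (sub_right_injective.comp Nat.cast_injective).injOn
  have h0 : 0 ∈ I := Set.mem_iUnion.2 ⟨τ, by simpa using hne⟩
  obtain ⟨i, hi⟩ := hI.exists_maximal ⟨0, h0⟩
  obtain ⟨τ', hτ'⟩ := Set.mem_iUnion.1 hi.prop
  refine ⟨i, τ', hτ', fun τ'' => ?_⟩
  by_contra hne'
  have hsucc : i + 1 ∈ I := Set.mem_iUnion.2 ⟨τ'', by simpa [sub_add_eq_sub_sub] using hne'⟩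
  exact i.lt_irrefl (Nat.succ_le_iff.1 (hi.le_of_ge hsucc i.le_succ))

end Cuspidality

section LowestIntermediateSeries

/-- The vectors `u j`, `j : ℤ`, span a module of the intermediate series for the operators `H` and
`d`, of charge `s` and parity `τ`, which is annihilated by all `G⁻ m`. -/
structure IsLowestIntermediateSeries (ρ : RamondRep V) (lam s β : ℂ) (τ : ZMod 2) (u : ℤ → V) :
    Prop where
  ne_zero : u 0 ≠ 0
  mem_component (j : ℤ) : u j ∈ ρ.component (lam + j) s τ
  Gm_apply (m j : ℤ) : ρ.Gm m (u j) = 0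
  H_apply (m j : ℤ) : ρ.H m (u j) = s • u (j + m)
  d_apply (m j : ℤ) : ρ.d m (u j) = (lam + j + β * m) • u (j + m)

theorem Cuspidal.exists_isLowestIntermediateSeries {ρ : RamondRep V} (hcusp : ρ.Cuspidal)
    {lam σ : ℂ} {τ : ZMod 2} (hσ : ∀ k : ℕ, σ ≠ k) (hne : ρ.component lam σ τ ≠ ⊥) :
    ∃ s β τ' u, ρ.IsLowestIntermediateSeries lam s β τ' u := by
  obtain ⟨i, τ', hne', hbot⟩ := hcusp.exists_minimal_charge hne
  have hs : σ - i ≠ 0 := sub_ne_zero.2 (hσ i)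
  have hs' : σ - i - 1 ≠ 0 := by
    rw [sub_sub, ← Nat.cast_succ]
    exact sub_ne_zero.2 (hσ _)
  obtain ⟨β, u, hmem, hu0, hH, hd⟩ :=
    (hcusp.heisenbergVirasoroModule lam hs τ').exists_intermediate_series
      (by simpa [Cuspidal.heisenbergVirasoroModule] using hne')
  refine ⟨σ - i, β, τ', u, hu0, hmem, fun m j => ?_, hH, hd⟩
  have h := ρ.Gm_mem_component m (hmem j)
  change _ ∈ ρ.component (lam + j + m) (σ - i - 1) (τ' + 1) at h
  rwa [add_assoc, ← Int.cast_add, hcusp.component_add_eq_bot hs' (hbot _)] at h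

end LowestIntermediateSeries

section LowestSubspaces

variable {ρ : RamondRep V}

/-- The smallest subspace containing `X` that is stable under all the operators `G⁺ m`. -/
def gpClosure (ρ : RamondRep V) (X : Submodule ℂ V) : Submodule ℂ V :=
  sInf {S | X ≤ S ∧ ∀ m, ∀ v ∈ S, ρ.Gp m v ∈ S}

theorem le_gpClosure (X : Submodule ℂ V) : X ≤ ρ.gpClosure X := le_sInf fun _ hS => hS.1

theorem gpClosure_le {X S : Submodule ℂ V} (hX : X ≤ S) (hS : ∀ m, ∀ v ∈ S, ρ.Gp m v ∈ S) :
    ρ.gpClosure X ≤ S := sInf_le ⟨hX, hS⟩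

theorem Gp_mem_gpClosure {X : Submodule ℂ V} (m : ℤ) {v : V} (hv : v ∈ ρ.gpClosure X) :
    ρ.Gp m v ∈ ρ.gpClosure X :=
  mem_sInf.2 fun _ hS => hS.2 m v (gpClosure_le hS.1 hS.2 hv)

theorem apply_mem_gpClosure {X : Submodule ℂ V} {A : Module.End ℂ V}
    (hX : ∀ v ∈ X, A v ∈ ρ.gpClosure X)
    (hGp : ∀ p, ∀ v ∈ ρ.gpClosure X, A v ∈ ρ.gpClosure X → A (ρ.Gp p v) ∈ ρ.gpClosure X)
    {v : V} (hv : v ∈ ρ.gpClosure X) : A v ∈ ρ.gpClosure X := by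
  have hle : ρ.gpClosure X ≤ ρ.gpClosure X ⊓ (ρ.gpClosure X).comap A :=
    gpClosure_le (le_inf (le_gpClosure X) hX) fun p v hv =>
      ⟨Gp_mem_gpClosure p hv.1, hGp p v hv.1 hv.2⟩
  exact (hle hv).2

theorem gpClosure_eq_inf_even_sup_inf_odd {X : Submodule ℂ V} {τ : ZMod 2}
    (hX : X ≤ ρ.parity τ) :
    ρ.gpClosure X = (ρ.gpClosure X ⊓ ρ.even) ⊔ (ρ.gpClosure X ⊓ ρ.odd) := by
  refine le_antisymm (gpClosure_le ?_ fun m v hv => ?_) (sup_le inf_le_left inf_le_left)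
  · exact (ρ.eq_inf_even_sup_inf_odd hX).le.trans
      (sup_le_sup (inf_le_inf_right _ (le_gpClosure X)) (inf_le_inf_right _ (le_gpClosure X)))
  · obtain ⟨a, ⟨ha, ha'⟩, b, ⟨hb, hb'⟩, rfl⟩ := mem_sup.1 hv
    rw [map_add, add_comm]
    exact add_mem_sup ⟨Gp_mem_gpClosure m hb, ρ.Gp_odd m b hb'⟩
      ⟨Gp_mem_gpClosure m ha, ρ.Gp_even m a ha'⟩

/-- A homogeneous subspace, stable under all `H m` and `d m`, that is annihilated by all `G⁻ m`. -/
structure IsLowestSubspace (ρ : RamondRep V) (X : Submodule ℂ V) (τ : ZMod 2) : Prop where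
  le_parity : X ≤ ρ.parity τ
  H_mem (m : ℤ) {v : V} : v ∈ X → ρ.H m v ∈ X
  d_mem (m : ℤ) {v : V} : v ∈ X → ρ.d m v ∈ X
  Gm_eq_zero (m : ℤ) {v : V} : v ∈ X → ρ.Gm m v = 0

theorem IsLowestSubspace.isGradedSubmod_gpClosure {X : Submodule ℂ V} {τ : ZMod 2}
    (hX : ρ.IsLowestSubspace X τ) : ρ.IsGradedSubmod (ρ.gpClosure X) := by
  have hH (m : ℤ) : ∀ v ∈ ρ.gpClosure X, ρ.H m v ∈ ρ.gpClosure X := fun _ =>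
    apply_mem_gpClosure (fun _ hv => le_gpClosure X (hX.H_mem m hv)) fun p v hv hHv => by
      rw [H_Gp]
      exact add_mem (Gp_mem_gpClosure p hHv) (Gp_mem_gpClosure _ hv)
  have hd (m : ℤ) : ∀ v ∈ ρ.gpClosure X, ρ.d m v ∈ ρ.gpClosure X := fun _ =>
    apply_mem_gpClosure (fun _ hv => le_gpClosure X (hX.d_mem m hv)) fun p v hv hdv => by
      rw [d_Gp]
      exact add_mem (Gp_mem_gpClosure p hdv) (smul_mem _ _ (Gp_mem_gpClosure _ hv))
  have hGm (m : ℤ) : ∀ v ∈ ρ.gpClosure X, ρ.Gm m v ∈ ρ.gpClosure X := fun _ =>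
    apply_mem_gpClosure (fun _ hv => hX.Gm_eq_zero m hv ▸ zero_mem _) fun p v hv hGv => by
      rw [Gm_Gp]
      exact sub_mem (add_mem (neg_mem (Gp_mem_gpClosure p hGv)) (smul_mem _ _ (hd _ v hv)))
        (smul_mem _ _ (hH _ v hv))
  refine ⟨⟨fun m v hv => ?_, hH, fun m _ => Gp_mem_gpClosure m, hGm⟩,
    gpClosure_eq_inf_even_sup_inf_odd hX.le_parity⟩
  rw [L_apply]
  exact add_mem (hd m v hv) (smul_mem _ _ (hH m v hv))

theorem IsLowestSubspace.eq_top {X Y : Submodule ℂ V} {τ : ZMod 2} (hX : ρ.IsLowestSubspace X τ)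
    (hsimple : ρ.IsSimple) (hne : X ≠ ⊥) (hXY : X ≤ Y) (hY : ∀ m, ∀ v ∈ Y, ρ.Gp m v ∈ Y) :
    Y = ⊤ := by
  obtain h | h := hsimple.2 _ hX.isGradedSubmod_gpClosure
  · exact absurd (eq_bot_mono (le_gpClosure X) h) hne
  · exact top_le_iff.1 (h ▸ gpClosure_le hXY hY)

/-- The vectors of `H 0`-charge `t` and parity `τ` annihilated by all `G⁻ m`. -/
noncomputable def lowestVectors (ρ : RamondRep V) (t : ℂ) (τ : ZMod 2) : Submodule ℂ V :=
  (⨅ m, LinearMap.ker (ρ.Gm m)) ⊓ Module.End.eigenspace (ρ.H 0) t ⊓ ρ.parity τ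

theorem mem_lowestVectors {t : ℂ} {τ : ZMod 2} {v : V} : v ∈ ρ.lowestVectors t τ ↔
    (∀ m, ρ.Gm m v = 0) ∧ ρ.H 0 v = t • v ∧ v ∈ ρ.parity τ := by
  simp only [lowestVectors, mem_inf, mem_iInf, LinearMap.mem_ker, Module.End.mem_eigenspace_iff,
    and_assoc]

theorem isLowestSubspace_lowestVectors (t : ℂ) (τ : ZMod 2) :
    ρ.IsLowestSubspace (ρ.lowestVectors t τ) τ where
  le_parity := inf_le_right
  H_mem m v hv := by
    obtain ⟨hG, hH, hτ⟩ := mem_lowestVectors.1 hv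
    refine mem_lowestVectors.2 ⟨fun p => ?_, by rw [H_H, hH, map_smul], ρ.H_mem_parity m hτ⟩
    simpa [hG] using (ρ.H_Gm m p v).symm
  d_mem m v hv := by
    obtain ⟨hG, hH, hτ⟩ := mem_lowestVectors.1 hv
    refine mem_lowestVectors.2 ⟨fun p => ?_, ?_, ρ.d_mem_parity m hτ⟩
    · simpa [hG] using (ρ.d_Gm m p v).symm
    · simpa [hH] using (ρ.d_H m 0 v).symm
  Gm_eq_zero m _ hv := (mem_lowestVectors.1 hv).1 m

theorem IsSimple.iSup_eigenspace_H_zero_eq_top (hsimple : ρ.IsSimple) {t : ℂ} {τ : ZMod 2}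
    (hne : ρ.lowestVectors t τ ≠ ⊥) : ⨆ i : ℕ, Module.End.eigenspace (ρ.H 0) (t + i) = ⊤ := by
  refine (isLowestSubspace_lowestVectors t τ).eq_top hsimple hne (fun v hv => ?_) fun m v hv => ?_
  · exact mem_iSup_of_mem 0 (Module.End.mem_eigenspace_iff.2
      (by simpa using (mem_lowestVectors.1 hv).2.1))
  · induction hv using iSup_induction' with
    | mem i v hv =>
      refine mem_iSup_of_mem (i + 1) (Module.End.mem_eigenspace_iff.2 ?_)
      rw [H_Gp, Module.End.mem_eigenspace_iff.1 hv, map_smul, add_zero]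
      push_cast
      module
    | zero => rw [map_zero]; exact zero_mem _
    | add v w _ _ hv hw => rw [map_add]; exact add_mem hv hw

theorem IsSimple.lowestVectors_eq_bot (hsimple : ρ.IsSimple) {s t : ℂ}
    (hst : ∀ i : ℕ, s ≠ t + i) {u : V} (hu : u ≠ 0) (hsu : ρ.H 0 u = s • u) (τ : ZMod 2) :
    ρ.lowestVectors t τ = ⊥ := by
  by_contra hne
  have hle : ⨆ i : ℕ, Module.End.eigenspace (ρ.H 0) (t + i) ≤
      ⨆ (c : ℂ) (_ : c ≠ s), Module.End.eigenspace (ρ.H 0) c :=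
    iSup_le fun i => le_iSup₂_of_le (t + i) (hst i).symm le_rfl
  rw [hsimple.iSup_eigenspace_H_zero_eq_top hne] at hle
  exact hu (disjoint_def.1 (Module.End.eigenspaces_iSupIndep (ρ.H 0) s) u
    (Module.End.mem_eigenspace_iff.2 hsu) (hle mem_top))

end LowestSubspaces

section Bound

variable {ρ : RamondRep V} {lam s β : ℂ} {τ : ZMod 2}
  {u : ℤ → V}

namespace IsLowestIntermediateSeries

theorem Gm_Gp_apply (hu : ρ.IsLowestIntermediateSeries lam s β τ u) (m a k : ℤ) :
    ρ.Gm m (ρ.Gp a (u (k - a))) = (-2 * (lam + k - a + β * (a + m) + m * s)) • u (k + m) := by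
  rw [Gm_Gp, hu.Gm_apply, map_zero, hu.d_apply, hu.H_apply, add_comm a m, sub_add_add_cancel]
  push_cast
  module

theorem Gp_apply_mem_component (hu : ρ.IsLowestIntermediateSeries lam s β τ u) (a k : ℤ) :
    ρ.Gp a (u (k - a)) ∈ ρ.component (lam + k) (s + 1) (τ + 1) := by
  have h := ρ.Gp_mem_component a (hu.mem_component (k - a))
  rwa [Int.cast_sub, ← add_sub_assoc, sub_add_cancel] at h

/-- The difference of the two sides is annihilated by all `G⁻ m`, as `Gm_Gp_apply` is affine
in `a`. -/
theorem Gp_apply_sub (hu : ρ.IsLowestIntermediateSeries lam s β τ u) (hsimple : ρ.IsSimple)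
    (a k : ℤ) :
    ρ.Gp a (u (k - a)) = (1 - a : ℂ) • ρ.Gp 0 (u k) + (a : ℂ) • ρ.Gp 1 (u (k - 1)) := by
  have hmem : ρ.Gp a (u (k - a)) -
      ((1 - a : ℂ) • ρ.Gp 0 (u (k - 0)) + (a : ℂ) • ρ.Gp 1 (u (k - 1))) ∈
        ρ.component (lam + k) (s + 1) (τ + 1) :=
    sub_mem (hu.Gp_apply_mem_component a k) (add_mem (smul_mem _ _ (hu.Gp_apply_mem_component 0 k))
      (smul_mem _ _ (hu.Gp_apply_mem_component 1 k)))
  obtain ⟨-, hH, hτ⟩ := ρ.mem_component.1 hmem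
  have hst (i : ℕ) : s ≠ s + 1 + i := by
    rw [add_assoc, add_comm 1, ← Nat.cast_succ]
    simp only [ne_eq, left_eq_add, Nat.cast_eq_zero, Nat.succ_ne_zero, not_false_eq_true]
  have hbot := hsimple.lowestVectors_eq_bot hst hu.ne_zero
    (ρ.mem_component.1 (hu.mem_component 0)).2.1 (τ + 1)
  have hdiff := (Submodule.eq_bot_iff _).1 hbot _ (mem_lowestVectors.2 ⟨fun m => by
    rw [map_sub, map_add, map_smul, map_smul, hu.Gm_Gp_apply, hu.Gm_Gp_apply, hu.Gm_Gp_apply]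
    push_cast
    module, hH, hτ⟩)
  rw [sub_zero] at hdiff
  exact sub_eq_zero.1 hdiff

theorem Gp_apply (hu : ρ.IsLowestIntermediateSeries lam s β τ u) (hsimple : ρ.IsSimple)
    (a j : ℤ) : ρ.Gp a (u j) =
      (1 - a : ℂ) • ρ.Gp 0 (u (j + a)) + (a : ℂ) • ρ.Gp 1 (u (j + a - 1)) := by
  simpa only [add_sub_cancel_right] using hu.Gp_apply_sub hsimple a (j + a)

theorem Gp_Gp_zero_apply (hu : ρ.IsLowestIntermediateSeries lam s β τ u) (hsimple : ρ.IsSimple)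
    (a j : ℤ) : ρ.Gp a (ρ.Gp 0 (u j)) = (-a : ℂ) • ρ.Gp 0 (ρ.Gp 1 (u (j + a - 1))) := by
  rw [Gp_Gp, hu.Gp_apply hsimple, map_add, map_smul, map_smul, Gp_Gp_self]
  module

theorem Gp_Gp_one_apply (hu : ρ.IsLowestIntermediateSeries lam s β τ u) (hsimple : ρ.IsSimple)
    (a j : ℤ) : ρ.Gp a (ρ.Gp 1 (u j)) = (1 - a : ℂ) • ρ.Gp 0 (ρ.Gp 1 (u (j + a))) := by
  rw [Gp_Gp, hu.Gp_apply hsimple, map_add, map_smul, map_smul, Gp_Gp_self, ρ.Gp_Gp 1 0]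
  module

theorem Gp_Gp_zero_Gp_one_apply (hu : ρ.IsLowestIntermediateSeries lam s β τ u)
    (hsimple : ρ.IsSimple) (a j : ℤ) : ρ.Gp a (ρ.Gp 0 (ρ.Gp 1 (u j))) = 0 := by
  rw [Gp_Gp, hu.Gp_Gp_one_apply hsimple, map_smul, Gp_Gp_self, smul_zero, neg_zero]

end IsLowestIntermediateSeries

/-- The family `(G⁺ 0) ^ a (G⁺ 1) ^ b u k` indexed by the triples `(k, a, b)` with `a, b < 2`. It
spans `V` when `V` is simple and `u` is a lowest intermediate series. -/
noncomputable def gpFamily (ρ : RamondRep V) (u : ℤ → V) (i : ℤ × Fin 2 × Fin 2) : V :=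
  (ρ.Gp 0 ^ (i.2.1 : ℕ)) ((ρ.Gp 1 ^ (i.2.2 : ℕ)) (u i.1))

namespace IsLowestIntermediateSeries

theorem isLowestSubspace_span_range (hu : ρ.IsLowestIntermediateSeries lam s β τ u) :
    ρ.IsLowestSubspace (span ℂ (Set.range u)) τ := by
  have hmap {A : Module.End ℂ V} {S : Submodule ℂ V} (hA : ∀ j, A (u j) ∈ S) :
      span ℂ (Set.range u) ≤ S.comap A := span_le.2 (Set.range_subset_iff.2 hA)
  have hmem (j : ℤ) : u j ∈ span ℂ (Set.range u) := subset_span ⟨j, rfl⟩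
  refine ⟨span_le.2 (Set.range_subset_iff.2 fun j => (hu.mem_component j).2), fun m _ hv => ?_,
    fun m _ hv => ?_, fun m _ hv => ?_⟩
  · exact hmap (fun j => hu.H_apply m j ▸ smul_mem _ _ (hmem _)) hv
  · exact hmap (fun j => hu.d_apply m j ▸ smul_mem _ _ (hmem _)) hv
  · exact hmap (S := ⊥) (fun j => hu.Gm_apply m j) hv

theorem Gp_gpFamily_mem (hu : ρ.IsLowestIntermediateSeries lam s β τ u) (hsimple : ρ.IsSimple)
    (m : ℤ) (i : ℤ × Fin 2 × Fin 2) :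
    ρ.Gp m (ρ.gpFamily u i) ∈ span ℂ (Set.range (ρ.gpFamily u)) := by
  have hmem (k : ℤ) (a b : Fin 2) :
      (ρ.Gp 0 ^ (a : ℕ)) ((ρ.Gp 1 ^ (b : ℕ)) (u k)) ∈ span ℂ (Set.range (ρ.gpFamily u)) :=
    subset_span ⟨(k, a, b), rfl⟩
  match i with
  | (k, 0, 0) =>
    change ρ.Gp m (u k) ∈ _
    rw [hu.Gp_apply hsimple]
    exact add_mem (smul_mem _ _ (hmem (k + m) 1 0)) (smul_mem _ _ (hmem (k + m - 1) 0 1))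
  | (k, 1, 0) =>
    change ρ.Gp m (ρ.Gp 0 (u k)) ∈ _
    rw [hu.Gp_Gp_zero_apply hsimple]
    exact smul_mem _ _ (hmem (k + m - 1) 1 1)
  | (k, 0, 1) =>
    change ρ.Gp m (ρ.Gp 1 (u k)) ∈ _
    rw [hu.Gp_Gp_one_apply hsimple]
    exact smul_mem _ _ (hmem (k + m) 1 1)
  | (k, 1, 1) =>
    change ρ.Gp m (ρ.Gp 0 (ρ.Gp 1 (u k))) ∈ _
    rw [hu.Gp_Gp_zero_Gp_one_apply hsimple]
    exact zero_mem _

theorem span_range_gpFamily (hu : ρ.IsLowestIntermediateSeries lam s β τ u)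
    (hsimple : ρ.IsSimple) : span ℂ (Set.range (ρ.gpFamily u)) = ⊤ := by
  refine hu.isLowestSubspace_span_range.eq_top hsimple ?_ ?_ fun m v hv => ?_
  · exact (Submodule.ne_bot_iff _).2 ⟨u 0, subset_span ⟨0, rfl⟩, hu.ne_zero⟩
  · exact span_mono (Set.range_subset_iff.2 fun k => ⟨(k, 0, 0), rfl⟩)
  · have hle : span ℂ (Set.range (ρ.gpFamily u)) ≤
        (span ℂ (Set.range (ρ.gpFamily u))).comap (ρ.Gp m) :=
      span_le.2 (Set.range_subset_iff.2 (hu.Gp_gpFamily_mem hsimple m))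
    exact hle hv

theorem gpFamily_mem (hu : ρ.IsLowestIntermediateSeries lam s β τ u) (i : ℤ × Fin 2 × Fin 2) :
    ρ.gpFamily u i ∈ ρ.wt (lam + i.1 + (i.2.2 : ℕ)) ⊓ ρ.parity (τ + (i.2.2 : ℕ) + (i.2.1 : ℕ)) := by
  obtain ⟨k, a, b⟩ := i
  have hb : (ρ.Gp 1 ^ (b : ℕ)) (u k) ∈ ρ.component (lam + k + (b : ℕ)) (s + (b : ℕ))
      (τ + (b : ℕ)) := by
    fin_cases b
    · simpa using hu.mem_component k
    · simpa using ρ.Gp_mem_component 1 (hu.mem_component k)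
  fin_cases a
  · simpa [gpFamily] using ρ.component_le _ _ _ hb
  · simpa [gpFamily] using ρ.component_le _ _ _ (ρ.Gp_mem_component 0 hb)

theorem rank_wt_inf_parity_le_two (hu : ρ.IsLowestIntermediateSeries lam s β τ u)
    (hsimple : ρ.IsSimple) (μ : ℂ) (τ' : ZMod 2) : Module.rank ℂ ↥(ρ.wt μ ⊓ ρ.parity τ') ≤ 2 := by
  let wtOf (i : ℤ × Fin 2 × Fin 2) : ℂ := lam + i.1 + (i.2.2 : ℕ)
  let parityOf (i : ℤ × Fin 2 × Fin 2) : ZMod 2 := τ + (i.2.2 : ℕ) + (i.2.1 : ℕ)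
  let I := {i | parityOf i = τ'} ∩ {i | wtOf i = μ}
  have hinj : Set.InjOn (fun i : ℤ × Fin 2 × Fin 2 => i.2.2) I := by
    rintro ⟨k, a, b⟩ ⟨hpar, hwt⟩ ⟨k', a', b'⟩ ⟨hpar', hwt'⟩ (rfl : b = b')
    have hk : k = k' := by simpa [wtOf] using hwt.trans hwt'.symm
    have ha : ((a : ℕ) : ZMod 2) = (a' : ℕ) := by simpa [parityOf] using hpar.trans hpar'.symm
    have hcast : ∀ a a' : Fin 2, ((a : ℕ) : ZMod 2) = (a' : ℕ) → a = a' := by decide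
    rw [hk, hcast a a' ha]
  have hle : ρ.wt μ ⊓ ρ.parity τ' ≤ span ℂ (ρ.gpFamily u '' I) := by
    have hpar := inf_span_image_le_span_image_inter ρ.iSupIndep_parity (f := parityOf)
      (fun i => (hu.gpFamily_mem i).2) Set.univ τ'
    rw [Set.image_univ, hu.span_range_gpFamily hsimple, inf_top_eq, Set.univ_inter] at hpar
    exact (inf_le_inf_left _ hpar).trans (inf_span_image_le_span_image_inter ρ.iSupIndep_wt
      (f := wtOf) (fun i => (hu.gpFamily_mem i).1) _ μ)
  calc Module.rank ℂ ↥(ρ.wt μ ⊓ ρ.parity τ')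
      ≤ Module.rank ℂ (span ℂ (ρ.gpFamily u '' I)) := rank_mono hle
    _ ≤ Cardinal.mk (ρ.gpFamily u '' I) := rank_span_le _
    _ ≤ Cardinal.mk I := Cardinal.mk_image_le
    _ ≤ Cardinal.mk (Fin 2) := Cardinal.mk_le_of_injective (Set.injOn_iff_injective.1 hinj)
    _ = 2 := Cardinal.mk_fin 2

end IsLowestIntermediateSeries

theorem IsSimple.rank_wt_inf_parity_le_two (hsimple : ρ.IsSimple) (hcusp : ρ.Cuspidal) {σ : ℂ}
    (hσ : ∀ k : ℕ, σ ≠ k) (hne : ρ.component lam σ τ ≠ ⊥) (μ : ℂ) (τ' : ZMod 2) :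
    Module.rank ℂ ↥(ρ.wt μ ⊓ ρ.parity τ') ≤ 2 := by
  obtain ⟨s, β, τ₀, u, hu⟩ := hcusp.exists_isLowestIntermediateSeries hσ hne
  exact hu.rank_wt_inf_parity_le_two hsimple μ τ'

end Bound

section Charge

variable {ρ : RamondRep V}

theorem IsSimple.nontrivial (hsimple : ρ.IsSimple) : Nontrivial V := by
  by_contra h
  rw [not_nontrivial_iff_subsingleton] at h
  exact hsimple.1 fun m v => ⟨Subsingleton.elim _ _, Subsingleton.elim _ _, Subsingleton.elim _ _,
    Subsingleton.elim _ _⟩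

theorem d_apply_eq_zero_of_forall_Gp_Gm {v : V} (hGp : ∀ m, ρ.Gp m v = 0)
    (hGm : ∀ m, ρ.Gm m v = 0) (n : ℤ) : ρ.d n v = 0 := by
  simpa [hGp, hGm] using ρ.Gm_Gp 0 n v

theorem H_apply_eq_zero_of_forall_Gp_Gm {v : V} (hGp : ∀ m, ρ.Gp m v = 0)
    (hGm : ∀ m, ρ.Gm m v = 0) (n : ℤ) : ρ.H n v = 0 := by
  simpa [hGp, hGm, d_apply_eq_zero_of_forall_Gp_Gm hGp hGm] using ρ.Gm_Gp 1 (n - 1) v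

theorem IsSimple.eq_zero_of_forall_Gp_Gm_apply_eq_zero (hsimple : ρ.IsSimple) {τ : ZMod 2} {v : V}
    (hv : v ∈ ρ.parity τ) (hGp : ∀ m, ρ.Gp m v = 0) (hGm : ∀ m, ρ.Gm m v = 0) : v = 0 := by
  have hH := H_apply_eq_zero_of_forall_Gp_Gm hGp hGm
  have hL (n : ℤ) : ρ.L n v = 0 := by
    rw [L_apply, d_apply_eq_zero_of_forall_Gp_Gm hGp hGm, hH, smul_zero, add_zero]
  have hker {A : Module.End ℂ V} (hA : A v = 0) : ∀ x ∈ span ℂ {v}, A x = 0 := fun x hx =>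
    (span_singleton_le_iff_mem v (LinearMap.ker A)).2 hA hx
  have hstable {A : Module.End ℂ V} (hA : A v = 0) : ∀ x ∈ span ℂ {v}, A x ∈ span ℂ {v} :=
    fun x hx => hker hA x hx ▸ zero_mem _
  have hgraded : ρ.IsGradedSubmod (span ℂ {v}) :=
    ⟨⟨fun m => hstable (hL m), fun m => hstable (hH m), fun m => hstable (hGp m),
      fun m => hstable (hGm m)⟩,
      ρ.eq_inf_even_sup_inf_odd ((span_singleton_le_iff_mem _ _).2 hv)⟩
  obtain h | h := hsimple.2 _ hgraded
  · exact span_singleton_eq_bot.1 h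
  · have hmem (x : V) : x ∈ span ℂ {v} := h ▸ mem_top
    exact absurd (fun m x => ⟨hker (hL m) x (hmem x), hker (hH m) x (hmem x),
      hker (hGp m) x (hmem x), hker (hGm m) x (hmem x)⟩) hsimple.1

theorem IsSimple.exists_charge_ne_zero (hsimple : ρ.IsSimple) (hcusp : ρ.Cuspidal) :
    ∃ μ σ τ, σ ≠ 0 ∧ ρ.component μ σ τ ≠ ⊥ := by
  have := hsimple.nontrivial
  obtain ⟨μ, σ, τ, hne⟩ := hcusp.exists_component_ne_bot
  by_cases hσ : σ = 0
  swap
  · exact ⟨μ, σ, τ, hσ, hne⟩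
  subst hσ
  obtain ⟨v, hv, hv0⟩ := exists_mem_ne_zero_of_ne_bot hne
  obtain ⟨m, hm⟩ | ⟨m, hm⟩ : (∃ m, ρ.Gp m v ≠ 0) ∨ ∃ m, ρ.Gm m v ≠ 0 := by
    by_contra! h
    exact hv0 (hsimple.eq_zero_of_forall_Gp_Gm_apply_eq_zero hv.2 h.1 h.2)
  · exact ⟨_, 0 + 1, _, by simp, (Submodule.ne_bot_iff _).2 ⟨_, ρ.Gp_mem_component m hv, hm⟩⟩
  · exact ⟨_, 0 - 1, _, by simp, (Submodule.ne_bot_iff _).2 ⟨_, ρ.Gm_mem_component m hv, hm⟩⟩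

end Charge

section Swap

variable {ρ : RamondRep V}

/-- The twist of `ρ` by the mirror involution `H ↦ -H`, `G⁺ ↔ G⁻`, which reverses charges. -/
def swap (ρ : RamondRep V) : RamondRep V where
  L := ρ.L
  H m := -ρ.H m
  Gp := ρ.Gm
  Gm := ρ.Gp
  c₀ := ρ.c₀
  even := ρ.even
  odd := ρ.odd
  grading := ρ.grading
  L_even := ρ.L_even
  L_odd := ρ.L_odd
  H_even m v hv := neg_mem (ρ.H_even m v hv)
  H_odd m v hv := neg_mem (ρ.H_odd m v hv)
  Gp_even := ρ.Gm_even
  Gp_odd := ρ.Gm_odd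
  Gm_even := ρ.Gp_even
  Gm_odd := ρ.Gp_odd
  rel_LL := ρ.rel_LL
  rel_HH m n v := by
    simp only [LinearMap.neg_apply, map_neg, neg_neg]
    exact ρ.rel_HH m n v
  rel_LH m n v := by
    simp only [LinearMap.neg_apply, map_neg]
    linear_combination (norm := module) -ρ.rel_LH m n v
  rel_LGp := ρ.rel_LGm
  rel_LGm := ρ.rel_LGp
  rel_HGp m p v := by
    simp only [LinearMap.neg_apply, map_neg]
    linear_combination (norm := module) -ρ.rel_HGm m p v
  rel_HGm m p v := by
    simp only [LinearMap.neg_apply, map_neg]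
    linear_combination (norm := module) -ρ.rel_HGp m p v
  rel_GpGm p q v := by
    have h := ρ.rel_GpGm q p v
    rw [mul_smul, c₀_smul, smul_zero, add_comm q p] at h
    rw [mul_smul, c₀_smul, smul_zero, LinearMap.neg_apply]
    linear_combination (norm := module) h
  rel_GpGp := ρ.rel_GmGm
  rel_GmGm := ρ.rel_GpGp

theorem IsSimple.swap (h : ρ.IsSimple) : ρ.swap.IsSimple := by
  refine ⟨fun htriv => h.1 fun m v => ?_, fun W ⟨⟨hL, hH, hGp, hGm⟩, hgraded⟩ => h.2 W ?_⟩
  · obtain ⟨hL, hH, hGp, hGm⟩ := htriv m v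
    exact ⟨hL, neg_eq_zero.1 hH, hGm, hGp⟩
  · exact ⟨⟨hL, fun m v hv => neg_mem_iff.1 (hH m v hv), hGm, hGp⟩, hgraded⟩

theorem component_swap (ρ : RamondRep V) (μ σ : ℂ) (τ : ZMod 2) :
    ρ.swap.component μ (-σ) τ = ρ.component μ σ τ := by
  ext v
  rw [mem_component, mem_component]
  change ρ.L 0 v = μ • v ∧ -ρ.H 0 v = (-σ) • v ∧ v ∈ ρ.parity τ ↔ _
  rw [neg_smul, neg_inj]

end Swap

end RamondRep

/-- any simple cuspidal module over the `N = 2` Ramond algebra has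
`dim (V_μ ∩ V_τ) ≤ 2` for every weight `μ` and parity `τ`. -/
theorem stmt8 {V : Type} [AddCommGroup V] [Module ℂ V] (ρ : RamondRep V)
    (hsimple : ρ.IsSimple) (hcusp : ρ.Cuspidal) :
    ∀ (μ : ℂ) (τ : ZMod 2), Module.rank ℂ ↥(ρ.wt μ ⊓ ρ.parity τ) ≤ 2 := by
  obtain ⟨lam, σ, τ, hσ, hne⟩ := hsimple.exists_charge_ne_zero hcusp
  by_cases hnat : ∀ k : ℕ, σ ≠ k
  · exact hsimple.rank_wt_inf_parity_le_two hcusp hnat hne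
  push Not at hnat
  obtain ⟨k, rfl⟩ := hnat
  have hneg (j : ℕ) : (-k : ℂ) ≠ j := fun h => hσ <| by
    rw [neg_eq_iff_add_eq_zero] at h
    norm_cast at h ⊢
    exact Nat.eq_zero_of_add_eq_zero_right h
  have hcusp' : ρ.swap.Cuspidal := hcusp
  rw [← ρ.component_swap] at hne
  exact hsimple.swap.rank_wt_inf_parity_le_two hcusp' hneg hne
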